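/- arXiv:1107.1016 — 6 statements merged into one kernel-verified Lean document; each statement's English description precedes it below -/
import Mathlib

section
/- Let n ≥ 1, let S ⊂ ℝⁿ be a well-centered convex body, and fix 0 ≤ s ≤ s₀ < 1. For each y ∈ (1−s)∂S (i.e. y = (1−s)p for some boundary point p of S) there exists a hyperplane P supporting S such that dist(y, P) ≤ c(n,s₀) · s^(1/2^(n−1)) · diam(P^⊥ ∩ S), where c(n,s₀) = n^(3/2) (n − 1/2) ((1 + s₀^(1/2^n))/(1 − s₀^(1/2^n)))^(n−1). -/
/-!
Let `f` map the unit ball onto the ellipsoid and put `g = f⁻¹`, so that `g S` lies between the unit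
ball and the ball of radius `r` (here `r = n`) and `q = g p` is a boundary point of it. A functional
`⟪g ·, w'⟫` on the original space has normal vector `v = g† w'`. The line through `v` contains
`± v / ‖g v‖ ∈ S`, so it meets `S` in a set of diameter at least `2 ‖v‖ / ‖g v‖`; and the distance
from `(1 - s) p` to the supporting hyperplane with normal `v` is `gap / ‖v‖`, where `gap` is the
maximum over `x ∈ S` of `⟪g x - (1 - s) q, w'⟫`. So `w'` has to make `gap` small compared with
`‖v‖² / ‖g v‖`.

Start from a unit vector `w` supporting `g S` at `q`, let `w_i` be its coordinates in an eigenbasis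
of `g g†` with decreasing eigenvalues `b_i`, and let `w'` keep only the coordinates with `i ≥ k`.
Since `‖v‖² = ∑ b_i w'_i²`, `‖g v‖² = ∑ b_i² w'_i²` and `b_k` is the largest eigenvalue left, we
have `‖v‖² / ‖g v‖ ≥ |w_k|`, while `gap ≤ r (s + 2 ‖w - w'‖)`. With `σ = s ^ (1/n)`, take for `k`
the first index at which a nonzero `w_k` reaches the threshold `σ ^ (n - 1 - k) / √n`; some index
does because `w` is a unit vector. The at most `n - 1` earlier coordinates are bounded by `σ |w_k|`,
and `s = σ ^ n ≤ √n σ |w_k|`, so `gap ≤ r (√n + 2 √(n - 1)) σ |w_k|`.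

The resulting rate `s ^ (1/n)` is at least as good as `s ^ (1/2^(n-1))`, because `n ≤ 2^(n-1)`.
-/

open Metric Set
open scoped RealInnerProductSpace Pointwise

section Coordinates

variable {n : ℕ} {w : Fin n → ℝ} {σ : ℝ}

lemma exists_one_le_sqrt_mul_abs (hw : ∑ i, w i ^ 2 = 1) : ∃ k, 1 ≤ √n * |w k| := by
  have hne : (Finset.univ : Finset (Fin n)).Nonempty :=
    Finset.nonempty_of_sum_ne_zero (hw.trans_ne one_ne_zero)
  have hsum : ∑ _i : Fin n, (1 : ℝ) ≤ ∑ i, n * w i ^ 2 := by simp [← Finset.mul_sum, hw]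
  obtain ⟨k, -, hk⟩ := Finset.exists_le_of_sum_le hne hsum
  refine ⟨k, ?_⟩
  rwa [← one_le_sq_iff₀ (by positivity), mul_pow, Real.sq_sqrt n.cast_nonneg, sq_abs]

lemma exists_first_pow_le_sqrt_mul_abs (hw : ∑ i, w i ^ 2 = 1) (hσ0 : 0 ≤ σ) (hσ1 : σ ≤ 1) :
    ∃ k, w k ≠ 0 ∧ σ ^ (n - 1 - (k : ℕ)) ≤ √n * |w k| ∧
      ∀ i < k, √n * |w i| ≤ σ ^ (n - 1 - (i : ℕ)) := by
  obtain ⟨j, hj⟩ := exists_one_le_sqrt_mul_abs hw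
  have hj0 : w j ≠ 0 := by
    intro h
    norm_num [h] at hj
  obtain ⟨k, ⟨hk0, hk⟩, hmin⟩ := wellFounded_lt.has_min
    {k : Fin n | w k ≠ 0 ∧ σ ^ (n - 1 - (k : ℕ)) ≤ √n * |w k|}
    ⟨j, hj0, (pow_le_one₀ hσ0 hσ1).trans hj⟩
  refine ⟨k, hk0, hk, fun i hi => ?_⟩
  by_contra! h
  refine hmin i ⟨fun hi0 => ?_, h.le⟩ hi
  exact (pow_nonneg hσ0 _).not_gt (by simpa [hi0] using h)

lemma exists_dominating_coordinate (hw : ∑ i, w i ^ 2 = 1) (hσ0 : 0 ≤ σ) (hσ1 : σ ≤ 1) :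
    ∃ k, w k ≠ 0 ∧ σ ^ n ≤ √n * (σ * |w k|) ∧ ∀ i < k, |w i| ≤ σ * |w k| := by
  obtain ⟨k, hk0, hk, hsmall⟩ := exists_first_pow_le_sqrt_mul_abs hw hσ0 hσ1
  have hn : (0 : ℝ) < √n := Real.sqrt_pos.2 (Nat.cast_pos.2 k.pos)
  have hstep : ∀ j, n - (k : ℕ) ≤ j → σ ^ j ≤ √n * (σ * |w k|) := fun j hj => by
    calc σ ^ j ≤ σ ^ (n - 1 - (k : ℕ) + 1) := pow_le_pow_of_le_one hσ0 hσ1 (by omega)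
      _ = σ * σ ^ (n - 1 - (k : ℕ)) := pow_succ' _ _
      _ ≤ σ * (√n * |w k|) := by gcongr
      _ = √n * (σ * |w k|) := by ring
  refine ⟨k, hk0, hstep n (Nat.sub_le _ _), fun i hi => le_of_mul_le_mul_left ?_ hn⟩
  exact (hsmall i hi).trans (hstep _ (by omega))

lemma sqrt_sum_sq_filter_lt_le {k : Fin n} {B : ℝ} (hB : 0 ≤ B) (hw : ∀ i < k, |w i| ≤ B) :
    √(∑ i with i < k, w i ^ 2) ≤ √(n - 1) * B := by
  have hcard : ((Finset.univ.filter (· < k)).card : ℝ) ≤ n - 1 := by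
    rw [Finset.filter_gt_eq_Iio, Fin.card_Iio, le_sub_iff_add_le]
    exact_mod_cast k.2
  rw [Real.sqrt_le_left (by positivity), mul_pow, Real.sq_sqrt ((Nat.cast_nonneg _).trans hcard)]
  calc ∑ i with i < k, w i ^ 2 ≤ (Finset.univ.filter (· < k)).card • B ^ 2 :=
        Finset.sum_le_card_nsmul _ _ _ fun i hi =>
          sq_le_sq.2 ((hw i (Finset.mem_filter.1 hi).2).trans (le_abs_self B))
    _ ≤ (n - 1) * B ^ 2 := by rw [nsmul_eq_mul]; gcongr

lemma exists_pow_add_sqrt_sum_sq_le (hw : ∑ i, w i ^ 2 = 1) (hσ0 : 0 ≤ σ) (hσ1 : σ ≤ 1) :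
    ∃ k, w k ≠ 0 ∧ σ ^ n + 2 * √(∑ i with i < k, w i ^ 2) ≤
      (√n + 2 * √(n - 1)) * σ * |w k| := by
  obtain ⟨k, hk0, hpow, hsmall⟩ := exists_dominating_coordinate hw hσ0 hσ1
  refine ⟨k, hk0, ?_⟩
  calc σ ^ n + 2 * √(∑ i with i < k, w i ^ 2)
      ≤ √n * (σ * |w k|) + 2 * (√(n - 1) * (σ * |w k|)) := by
        gcongr
        exact sqrt_sum_sq_filter_lt_le (by positivity) hsmall
    _ = (√n + 2 * √(n - 1)) * σ * |w k| := by ring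

end Coordinates

lemma abs_mul_sqrt_sum_sq_le {ι : Type*} [Fintype ι] [LinearOrder ι] {b x : ι → ℝ}
    (hb : ∀ i, 0 ≤ b i) (hanti : Antitone b) {k : ι} (hx : ∀ i < k, x i = 0) :
    |x k| * √(∑ i, (b i * x i) ^ 2) ≤ ∑ i, b i * x i ^ 2 := by
  have hterm : ∀ i ∈ Finset.univ, 0 ≤ b i * x i ^ 2 := fun i _ => mul_nonneg (hb i) (sq_nonneg _)
  have hsq : ∑ i, (b i * x i) ^ 2 ≤ b k * ∑ i, b i * x i ^ 2 := by
    rw [Finset.mul_sum]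
    refine Finset.sum_le_sum fun i hi => ?_
    rcases lt_or_ge i k with hik | hki
    · simp [hx i hik]
    · calc (b i * x i) ^ 2 = b i * (b i * x i ^ 2) := by ring
        _ ≤ b k * (b i * x i ^ 2) := mul_le_mul_of_nonneg_right (hanti hki) (hterm i hi)
  have hsingle : b k * x k ^ 2 ≤ ∑ i, b i * x i ^ 2 :=
    Finset.single_le_sum hterm (Finset.mem_univ k)
  rw [← Real.sqrt_sq_eq_abs, ← Real.sqrt_mul (sq_nonneg _)]
  refine Real.sqrt_le_iff.2 ⟨Finset.sum_nonneg hterm, ?_⟩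
  calc x k ^ 2 * ∑ i, (b i * x i) ^ 2 ≤ x k ^ 2 * (b k * ∑ i, b i * x i ^ 2) := by gcongr
    _ = (b k * x k ^ 2) * ∑ i, b i * x i ^ 2 := by ring
    _ ≤ (∑ i, b i * x i ^ 2) * ∑ i, b i * x i ^ 2 := by
      gcongr
      exact Finset.sum_nonneg hterm
    _ = (∑ i, b i * x i ^ 2) ^ 2 := (sq _).symm

section Tail

variable {ι F : Type*} [Fintype ι] [LinearOrder ι] [NormedAddCommGroup F] [InnerProductSpace ℝ F]

/-- The orthogonal projection of `w` onto the span of the basis vectors `u i` with `k ≤ i`, given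
by its coordinates. -/
noncomputable def tailProj (u : OrthonormalBasis ι ℝ F) (k : ι) (w : F) : F :=
  ∑ i with k ≤ i, ⟪u i, w⟫ • u i

lemma inner_tailProj (u : OrthonormalBasis ι ℝ F) (k : ι) (w : F) (i : ι) :
    ⟪u i, tailProj u k w⟫ = if k ≤ i then ⟪u i, w⟫ else 0 := by
  simp [tailProj, inner_sum, real_inner_smul_right, u.inner_eq_ite, Finset.sum_ite_eq]

lemma norm_sub_tailProj (u : OrthonormalBasis ι ℝ F) (k : ι) (w : F) :
    ‖w - tailProj u k w‖ = √(∑ i with i < k, ⟪u i, w⟫ ^ 2) := by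
  rw [← Real.sqrt_sq (norm_nonneg _), ← u.sum_sq_inner_right, Finset.sum_filter]
  congr! 2 with i
  rw [inner_sub_right, inner_tailProj]
  rcases lt_or_ge i k with hik | hki
  · simp [hik, hik.not_ge]
  · simp [hki, hki.not_gt]

end Tail

section Spectral

variable {E F : Type*} [NormedAddCommGroup E] [InnerProductSpace ℝ E] [FiniteDimensional ℝ E]
  [NormedAddCommGroup F] [InnerProductSpace ℝ F] [FiniteDimensional ℝ F] {n : ℕ}

lemma abs_inner_eigenvectorBasis_mul_norm_le {T : F →ₗ[ℝ] F} (hT : T.IsPositive)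
    (hn : Module.finrank ℝ F = n) {k : Fin n} {x : F}
    (hx : ∀ i < k, ⟪hT.isSymmetric.eigenvectorBasis hn i, x⟫ = 0) :
    |⟪hT.isSymmetric.eigenvectorBasis hn k, x⟫| * ‖T x‖ ≤ ⟪x, T x⟫ := by
  set u := hT.isSymmetric.eigenvectorBasis hn
  set b := hT.isSymmetric.eigenvalues hn
  have hcoord : ∀ i, ⟪u i, T x⟫ = b i * ⟪u i, x⟫ := fun i => by
    simpa only [OrthonormalBasis.repr_apply_apply, RCLike.ofReal_real_eq_id, id_eq] using
      hT.isSymmetric.eigenvectorBasis_apply_self_apply hn x i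
  have hnorm : ‖T x‖ = √(∑ i, (b i * ⟪u i, x⟫) ^ 2) := by
    rw [← Real.sqrt_sq (norm_nonneg _), ← u.sum_sq_inner_right]
    simp only [hcoord]
  have hinner : ⟪x, T x⟫ = ∑ i, b i * ⟪u i, x⟫ ^ 2 := by
    rw [← u.sum_inner_mul_inner]
    refine Finset.sum_congr rfl fun i _ => ?_
    rw [hcoord, real_inner_comm]
    ring
  rw [hnorm, hinner]
  exact abs_mul_sqrt_sum_sq_le (hT.nonneg_eigenvalues hn)
    (hT.isSymmetric.eigenvalues_antitone hn) hx

lemma exists_pow_add_norm_sub_le_and_mul_norm_le (g : E →ₗ[ℝ] F) (hn : Module.finrank ℝ F = n)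
    {w : F} (hw : ‖w‖ = 1) {σ : ℝ} (hσ0 : 0 ≤ σ) (hσ1 : σ ≤ 1) :
    ∃ (w' : F) (m : ℝ), w' ≠ 0 ∧ σ ^ n + 2 * ‖w - w'‖ ≤ (√n + 2 * √(n - 1)) * σ * m ∧
      m * ‖g (g.adjoint w')‖ ≤ ‖g.adjoint w'‖ ^ 2 := by
  have hpos := g.isPositive_self_comp_adjoint
  set u := hpos.isSymmetric.eigenvectorBasis hn
  obtain ⟨k, hk0, hk⟩ := exists_pow_add_sqrt_sum_sq_le (w := fun i => ⟪u i, w⟫)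
    (by rw [u.sum_sq_inner_right, hw, one_pow]) hσ0 hσ1
  have huk : ⟪u k, tailProj u k w⟫ = ⟪u k, w⟫ := by simp [inner_tailProj]
  refine ⟨tailProj u k w, |⟪u k, w⟫|, fun h => hk0 ?_, ?_, ?_⟩
  · rw [← huk, h, inner_zero_right]
  · rwa [norm_sub_tailProj]
  · rw [← huk, ← real_inner_self_eq_norm_sq, LinearMap.adjoint_inner_left]
    exact abs_inner_eigenvectorBasis_mul_norm_le hpos hn fun i hi => by
      rw [inner_tailProj, if_neg hi.not_ge]

end Spectral

section Geometry

variable {E F : Type*} [NormedAddCommGroup E] [InnerProductSpace ℝ E]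
  [NormedAddCommGroup F] [InnerProductSpace ℝ F]

lemma exists_unit_normal [CompleteSpace E] {S : Set E} {p : E} (hS : Convex ℝ S)
    (hp : p ∉ interior S) (hint : (interior S).Nonempty) :
    ∃ w : E, ‖w‖ = 1 ∧ ∀ x ∈ S, ⟪x, w⟫ ≤ ⟪p, w⟫ := by
  obtain ⟨l, hl0, hl⟩ := geometric_hahn_banach_of_nonempty_interior_point hS hp hint
  set w := (InnerProductSpace.toDual ℝ E).symm l
  have hw : ∀ x, ⟪x, w⟫ = l x := fun x => by
    rw [real_inner_comm, InnerProductSpace.toDual_symm_apply]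
  have hw0 : w ≠ 0 := by simpa [w] using hl0
  refine ⟨‖w‖⁻¹ • w, norm_smul_inv_norm hw0, fun x hx => ?_⟩
  rw [real_inner_smul_right, real_inner_smul_right, hw, hw]
  gcongr
  exact hl x hx

lemma infDist_hyperplane_le {v : E} (hv : v ≠ 0) (c : ℝ) (y : E) :
    infDist y {x | ⟪x, v⟫ = c} ≤ |c - ⟪y, v⟫| / ‖v‖ := by
  have hv' : ‖v‖ ≠ 0 := norm_ne_zero_iff.2 hv
  have hmem : y + ((c - ⟪y, v⟫) / ‖v‖ ^ 2) • v ∈ {x | ⟪x, v⟫ = c} := by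
    simp only [mem_ofPred_eq, inner_add_left, real_inner_smul_left, real_inner_self_eq_norm_sq]
    field_simp
    ring
  calc infDist y {x | ⟪x, v⟫ = c} ≤ dist y (y + ((c - ⟪y, v⟫) / ‖v‖ ^ 2) • v) :=
        infDist_le_dist_of_mem hmem
    _ = |c - ⟪y, v⟫| / ‖v‖ := by
      rw [dist_self_add_right, norm_smul, Real.norm_eq_abs, abs_div, abs_sq]
      field_simp

lemma exists_supporting_hyperplane_infDist_le {S : Set E} (hS : IsCompact S) {v y : E} (hv : v ≠ 0)
    (hy : y ∈ S) {δ : ℝ} (hδ : ∀ x ∈ S, ⟪x - y, v⟫ ≤ δ * ‖v‖) :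
    ∃ c : ℝ, ({x | ⟪x, v⟫ = c} ∩ S).Nonempty ∧ (∀ x ∈ S, ⟪x, v⟫ ≤ c) ∧
      infDist y {x | ⟪x, v⟫ = c} ≤ δ := by
  obtain ⟨x₀, hx₀, hmax⟩ := hS.exists_isMaxOn ⟨y, hy⟩ (f := fun x => ⟪x, v⟫) (by fun_prop)
  refine ⟨⟪x₀, v⟫, ⟨x₀, rfl, hx₀⟩, fun x hx => hmax hx, ?_⟩
  calc infDist y {x | ⟪x, v⟫ = ⟪x₀, v⟫} ≤ |⟪x₀, v⟫ - ⟪y, v⟫| / ‖v‖ := infDist_hyperplane_le hv _ y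
    _ = ⟪x₀ - y, v⟫ / ‖v‖ := by rw [abs_of_nonneg (sub_nonneg.2 (hmax hy)), inner_sub_left]
    _ ≤ δ := (div_le_iff₀ (norm_pos_iff.2 hv)).2 (hδ x₀ hx₀)

lemma two_mul_norm_div_norm_symm_le_diam {S : Set E} (hS : Bornology.IsBounded S) (f : F ≃ₗ[ℝ] E)
    (hfS : f '' closedBall 0 1 ⊆ S) (v : E) :
    2 * (‖v‖ / ‖f.symm v‖) ≤ diam ((Submodule.span ℝ {v} : Set E) ∩ S) := by
  set z := ‖f.symm v‖⁻¹ • f.symm v with hz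
  have hz1 : ‖z‖ ≤ 1 := by
    rw [hz, norm_smul, norm_inv, norm_norm]
    exact inv_mul_le_one
  have hfz : f z = ‖f.symm v‖⁻¹ • v := by rw [hz, map_smul, f.apply_symm_apply]
  have hspan : f z ∈ Submodule.span ℝ {v} :=
    hfz ▸ Submodule.smul_mem _ _ (Submodule.mem_span_singleton_self v)
  have hmem : f z ∈ (Submodule.span ℝ {v} : Set E) ∩ S :=
    ⟨hspan, hfS ⟨z, by simpa using hz1, rfl⟩⟩
  have hmem_neg : -f z ∈ (Submodule.span ℝ {v} : Set E) ∩ S :=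
    ⟨neg_mem hspan, hfS ⟨-z, by simpa using hz1, map_neg f z⟩⟩
  calc 2 * (‖v‖ / ‖f.symm v‖) = dist (f z) (-f z) := by
        rw [dist_eq_norm, sub_neg_eq_add, ← two_smul ℝ, norm_smul, hfz, norm_smul, norm_inv,
          norm_norm, Real.norm_two]
        ring
    _ ≤ _ := dist_le_diam_of_mem (hS.subset inter_subset_right) hmem hmem_neg

lemma inner_sub_smul_le_of_inner_le {q w w' x : E} {r s : ℝ} (hs0 : 0 ≤ s) (hs1 : s ≤ 1)
    (hq : ‖q‖ ≤ r) (hx : ‖x‖ ≤ r) (hw : ‖w‖ ≤ 1) (hxq : ⟪x, w⟫ ≤ ⟪q, w⟫) :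
    ⟪x - (1 - s) • q, w'⟫ ≤ r * (s + 2 * ‖w - w'‖) := by
  have hqw : ⟪q, w⟫ ≤ r := by
    calc ⟪q, w⟫ ≤ ‖q‖ * ‖w‖ := real_inner_le_norm q w
      _ ≤ ‖q‖ * 1 := by gcongr
      _ ≤ r := by rwa [mul_one]
  have hdist : ‖x - (1 - s) • q‖ ≤ 2 * r := by
    calc ‖x - (1 - s) • q‖ ≤ ‖x‖ + ‖(1 - s) • q‖ := norm_sub_le _ _
      _ = ‖x‖ + (1 - s) * ‖q‖ := by
        rw [norm_smul, Real.norm_of_nonneg (sub_nonneg.2 hs1)]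
      _ ≤ ‖x‖ + 1 * ‖q‖ := by gcongr; linarith
      _ ≤ 2 * r := by linarith
  calc ⟪x - (1 - s) • q, w'⟫
      = (⟪x, w⟫ - ⟪q, w⟫) + s * ⟪q, w⟫ - ⟪x - (1 - s) • q, w - w'⟫ := by
        simp only [inner_sub_left, inner_sub_right, real_inner_smul_left]
        ring
    _ ≤ 0 + s * r + ‖x - (1 - s) • q‖ * ‖w - w'‖ := by
        rw [sub_eq_add_neg]
        gcongr
        · exact sub_nonpos.2 hxq
        · exact (neg_le_abs _).trans (abs_real_inner_le_norm _ _)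
    _ ≤ 0 + s * r + 2 * r * ‖w - w'‖ := by gcongr
    _ = r * (s + 2 * ‖w - w'‖) := by ring

end Geometry

section Ellipsoid

variable {E : Type*} [NormedAddCommGroup E] [InnerProductSpace ℝ E] [FiniteDimensional ℝ E]

lemma exists_unit_normal_symm {S : Set E} (hconv : Convex ℝ S) (f : E ≃ₗ[ℝ] E)
    (hfS : f '' closedBall 0 1 ⊆ S) {p : E} (hp : p ∉ interior S) :
    ∃ w : E, ‖w‖ = 1 ∧ ∀ x ∈ S, ⟪f.symm x, w⟫ ≤ ⟪f.symm p, w⟫ := by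
  have hint : (interior (f ⁻¹' S)).Nonempty :=
    ⟨0, interior_mono (image_subset_iff.1 hfS) (by simp [interior_closedBall])⟩
  have hpre : f ⁻¹' interior S = interior (f ⁻¹' S) :=
    f.toContinuousLinearEquiv.toHomeomorph.preimage_interior S
  have hp' : f.symm p ∉ interior (f ⁻¹' S) := by
    rwa [← hpre, mem_preimage, f.apply_symm_apply]
  obtain ⟨w, hw, hsup⟩ := exists_unit_normal (hconv.linear_preimage f.toLinearMap) hp' hint
  exact ⟨w, hw, fun x hx => hsup _ (by simpa using hx)⟩

lemma adjoint_symm_ne_zero (f : E ≃ₗ[ℝ] E) {w : E} (hw : w ≠ 0) :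
    f.symm.toLinearMap.adjoint w ≠ 0 := by
  intro h
  have hadj := LinearMap.adjoint_inner_right f.symm.toLinearMap (f w) w
  rw [h, inner_zero_right, LinearEquiv.coe_coe, f.symm_apply_apply] at hadj
  exact hw (inner_self_eq_zero.1 hadj.symm)

lemma exists_normal_inner_sub_le {n : ℕ} (hn : Module.finrank ℝ E = n) {S : Set E}
    (hconv : Convex ℝ S) (f : E ≃ₗ[ℝ] E) (hfS : f '' closedBall 0 1 ⊆ S) {r : ℝ}
    (hSf : S ⊆ f '' closedBall 0 r) {s : ℝ} (hs0 : 0 ≤ s) (hs1 : s ≤ 1) {p : E} (hpS : p ∈ S)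
    (hp : p ∉ interior S) :
    ∃ v : E, v ≠ 0 ∧ ∀ x ∈ S, ⟪x - (1 - s) • p, v⟫ ≤
      r * (√n / 2 + √(n - 1)) * s ^ ((1 : ℝ) / n) * (2 * (‖v‖ / ‖f.symm v‖)) * ‖v‖ := by
  have hnorm : ∀ x ∈ S, ‖f.symm x‖ ≤ r := fun x hx => by
    obtain ⟨z, hz, rfl⟩ := hSf hx
    simpa using hz
  have hr : 0 ≤ r := (norm_nonneg _).trans (hnorm p hpS)
  obtain ⟨w, hw, hsup⟩ := exists_unit_normal_symm hconv f hfS hp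
  have hw0 : w ≠ 0 := ne_zero_of_norm_ne_zero (hw.trans_ne one_ne_zero)
  have hn0 : n ≠ 0 := hn ▸ (Module.finrank_pos_iff_exists_ne_zero.2 ⟨w, hw0⟩).ne'
  obtain ⟨w', m, hw'0, htail, hm⟩ := exists_pow_add_norm_sub_le_and_mul_norm_le
    f.symm.toLinearMap hn hw (Real.rpow_nonneg hs0 ((1 : ℝ) / n))
    (Real.rpow_le_one hs0 hs1 (by positivity))
  rw [one_div, Real.rpow_inv_natCast_pow hs0 hn0, ← one_div] at htail
  set v := f.symm.toLinearMap.adjoint w'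
  have hv : v ≠ 0 := adjoint_symm_ne_zero f hw'0
  have hgv : 0 < ‖f.symm v‖ := norm_pos_iff.2 (by simpa using hv)
  have hm' : m ≤ ‖v‖ / ‖f.symm v‖ * ‖v‖ := by
    rw [div_mul_eq_mul_div, ← sq]
    exact (le_div_iff₀ hgv).2 hm
  refine ⟨v, hv, fun x hx => ?_⟩
  calc ⟪x - (1 - s) • p, v⟫ = ⟪f.symm x - (1 - s) • f.symm p, w'⟫ := by
        rw [LinearMap.adjoint_inner_right, LinearEquiv.coe_coe, map_sub, map_smul]
    _ ≤ r * (s + 2 * ‖w - w'‖) :=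
        inner_sub_smul_le_of_inner_le hs0 hs1 (hnorm p hpS) (hnorm x hx) hw.le (hsup x hx)
    _ ≤ r * ((√n + 2 * √(n - 1)) * s ^ ((1 : ℝ) / n) * m) := by gcongr
    _ ≤ r * ((√n + 2 * √(n - 1)) * s ^ ((1 : ℝ) / n) * (‖v‖ / ‖f.symm v‖ * ‖v‖)) := by gcongr
    _ = _ := by ring

theorem statement0_general {n : ℕ} (hn : Module.finrank ℝ E = n) {S : Set E}
    (hcomp : IsCompact S) (hconv : Convex ℝ S) (f : E ≃ₗ[ℝ] E)
    (hfS : f '' closedBall 0 1 ⊆ S) {r : ℝ} (hSf : S ⊆ f '' closedBall 0 r)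
    {s : ℝ} (hs0 : 0 ≤ s) (hs1 : s ≤ 1) {p : E} (hp : p ∈ frontier S) :
    ∃ (v : E) (c : ℝ), v ≠ 0 ∧ ({x | ⟪x, v⟫ = c} ∩ S).Nonempty ∧ (∀ x ∈ S, ⟪x, v⟫ ≤ c) ∧
      infDist ((1 - s) • p) {x | ⟪x, v⟫ = c} ≤
        r * (√n / 2 + √(n - 1)) * s ^ ((1 : ℝ) / n) *
          diam ((Submodule.span ℝ {v} : Set E) ∩ S) := by
  have hpS : p ∈ S := hcomp.isClosed.frontier_subset hp
  have h0S : (0 : E) ∈ S := hfS ⟨0, by simp, map_zero f⟩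
  have hr : 0 ≤ r := by
    obtain ⟨z, hz, -⟩ := hSf h0S
    exact nonempty_closedBall.1 ⟨z, hz⟩
  have hyS : (1 - s) • p ∈ S :=
    hconv.smul_mem_of_zero_mem h0S hpS ⟨sub_nonneg.2 hs1, sub_le_self 1 hs0⟩
  obtain ⟨v, hv, hgap⟩ := exists_normal_inner_sub_le hn hconv f hfS hSf hs0 hs1 hpS hp.2
  obtain ⟨c, hne, hsup, hdist⟩ := exists_supporting_hyperplane_infDist_le hcomp hv hyS hgap
  refine ⟨v, c, hv, hne, hsup, hdist.trans ?_⟩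
  gcongr
  exact two_mul_norm_div_norm_symm_le_diam hcomp.isBounded f hfS v

end Ellipsoid

section Constants

variable {n : ℕ}

lemma natCast_mul_half_sqrt_add_sqrt_sub_one_le (hn : 1 ≤ n) :
    (n : ℝ) * (√n / 2 + √(n - 1)) ≤ (n : ℝ) ^ ((3 : ℝ) / 2) * (n - 1 / 2) := by
  have hn1 : (1 : ℝ) ≤ n := by exact_mod_cast hn
  have hpow : (n : ℝ) ^ ((3 : ℝ) / 2) = n * √n := by
    rw [Real.sqrt_eq_rpow, show (3 : ℝ) / 2 = 1 + 1 / 2 by norm_num,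
      Real.rpow_add (by positivity), Real.rpow_one]
  have hsqrt : √((n : ℝ) - 1) ≤ √n * (n - 1) := by
    rcases hn.eq_or_lt with rfl | hn2
    · simp
    · have : (1 : ℝ) ≤ n - 1 := by
        rw [le_sub_iff_add_le]
        exact_mod_cast hn2
      calc √((n : ℝ) - 1) ≤ √n := Real.sqrt_le_sqrt (by linarith)
        _ ≤ √n * (n - 1) := le_mul_of_one_le_right (Real.sqrt_nonneg _) this
  calc (n : ℝ) * (√n / 2 + √(n - 1)) ≤ n * (√n / 2 + √n * (n - 1)) := by gcongr
    _ = (n : ℝ) ^ ((3 : ℝ) / 2) * (n - 1 / 2) := by rw [hpow]; ring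

lemma rpow_one_div_le_rpow_one_div_two_pow {s : ℝ} (hn : 1 ≤ n) (hs0 : 0 ≤ s) (hs1 : s ≤ 1) :
    s ^ ((1 : ℝ) / n) ≤ s ^ ((1 : ℝ) / 2 ^ (n - 1)) := by
  have hn2 : n ≤ 2 ^ (n - 1) := by
    have := (n - 1).lt_two_pow_self
    omega
  have hn2' : (n : ℝ) ≤ 2 ^ (n - 1) := by exact_mod_cast hn2
  refine Real.rpow_le_rpow_of_exponent_ge' hs0 hs1 (by positivity) ?_
  gcongr

lemma one_le_one_add_div_one_sub {t : ℝ} (ht0 : 0 ≤ t) (ht1 : t < 1) :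
    1 ≤ (1 + t) / (1 - t) := by
  rw [one_le_div (sub_pos.2 ht1)]
  linarith

lemma sharp_bound_le {s s₀ : ℝ} (hn : 1 ≤ n) (hs : 0 ≤ s) (hss₀ : s ≤ s₀) (hs₀ : s₀ < 1) :
    (n : ℝ) * (√n / 2 + √(n - 1)) * s ^ ((1 : ℝ) / n) ≤
      ((n : ℝ) ^ ((3 : ℝ) / 2) * (n - 1 / 2) *
        ((1 + s₀ ^ ((1 : ℝ) / 2 ^ n)) / (1 - s₀ ^ ((1 : ℝ) / 2 ^ n))) ^ (n - 1)) *
      s ^ ((1 : ℝ) / 2 ^ (n - 1)) := by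
  have hs₀0 : 0 ≤ s₀ := hs.trans hss₀
  have hconst := natCast_mul_half_sqrt_add_sqrt_sub_one_le hn
  have hfactor : 1 ≤ ((1 + s₀ ^ ((1 : ℝ) / 2 ^ n)) / (1 - s₀ ^ ((1 : ℝ) / 2 ^ n))) ^ (n - 1) :=
    one_le_pow₀ (one_le_one_add_div_one_sub (Real.rpow_nonneg hs₀0 _)
      (Real.rpow_lt_one hs₀0 hs₀ (by positivity)))
  have hconst0 : 0 ≤ (n : ℝ) ^ ((3 : ℝ) / 2) * (n - 1 / 2) := le_trans (by positivity) hconst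
  exact mul_le_mul (hconst.trans (le_mul_of_one_le_right hconst0 hfactor))
    (rpow_one_div_le_rpow_one_div_two_pow hn hs (hss₀.trans hs₀.le)) (Real.rpow_nonneg hs _)
    (by positivity)

end Constants

lemma smul_image_unitClosedBall {V W : Type*} [NormedAddCommGroup V] [NormedSpace ℝ V]
    [AddCommGroup W] [Module ℝ W] (f : V →ₗ[ℝ] W) {r : ℝ} (hr : 0 ≤ r) :
    r • (f '' closedBall 0 1) = f '' closedBall 0 r := by
  rw [← image_smul_set, smul_unitClosedBall_of_nonneg hr]

/-- Let `S ⊂ ℝⁿ` (`n ≥ 1`) be a well-centered convex body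
(a compact convex set with nonempty interior such that `E ⊆ S ⊆ n • E` for some
ellipsoid `E` centered at the origin, i.e. the image of the unit ball under an
invertible linear map), and fix `0 ≤ s ≤ s₀ < 1`.  For each `y ∈ (1-s) ∂S`
there is a supporting hyperplane `P = {x | ⟪x, v⟫ = c}` of `S` with
`dist(y, P) ≤ c(n, s₀) · s^(1/2^(n-1)) · diam (P^⊥ ∩ S)`, where `P^⊥` is the
line through the origin spanned by `v` and
`c(n, s₀) = n^(3/2) (n - 1/2) ((1 + s₀^(1/2^n)) / (1 - s₀^(1/2^n)))^(n-1)`. -/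
theorem statement0 (n : ℕ) (hn : 1 ≤ n)
    (S : Set (EuclideanSpace ℝ (Fin n)))
    (hScomp : IsCompact S) (hSconv : Convex ℝ S) (hSint : (interior S).Nonempty)
    (f : EuclideanSpace ℝ (Fin n) ≃ₗ[ℝ] EuclideanSpace ℝ (Fin n))
    (hES : f '' closedBall 0 1 ⊆ S)
    (hSE : S ⊆ (n : ℝ) • (f '' closedBall 0 1))
    (s s₀ : ℝ) (hs : 0 ≤ s) (hss₀ : s ≤ s₀) (hs₀ : s₀ < 1)
    (p : EuclideanSpace ℝ (Fin n)) (hp : p ∈ frontier S)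
    (y : EuclideanSpace ℝ (Fin n)) (hy : y = (1 - s) • p) :
    ∃ (v : EuclideanSpace ℝ (Fin n)) (c : ℝ), v ≠ 0 ∧
      ({x | ⟪x, v⟫ = c} ∩ S).Nonempty ∧
      (∀ x ∈ S, ⟪x, v⟫ ≤ c) ∧
      infDist y {x | ⟪x, v⟫ = c} ≤
        ((n : ℝ) ^ ((3 : ℝ) / 2) * ((n : ℝ) - 1 / 2) *
            ((1 + s₀ ^ ((1 : ℝ) / 2 ^ n)) / (1 - s₀ ^ ((1 : ℝ) / 2 ^ n))) ^ (n - 1)) *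
          s ^ ((1 : ℝ) / 2 ^ (n - 1)) *
          diam ((Submodule.span ℝ {v} : Set (EuclideanSpace ℝ (Fin n))) ∩ S) := by
  obtain ⟨v, c, hv, hne, hsup, hdist⟩ := statement0_general finrank_euclideanSpace_fin hScomp
    hSconv f hES (hSE.trans (smul_image_unitClosedBall f.toLinearMap n.cast_nonneg).subset) hs
    (hss₀.trans hs₀.le) hp
  exact ⟨v, c, hv, hne, hsup, hy ▸ hdist.trans
    (mul_le_mul_of_nonneg_right (sharp_bound_le hn hs hss₀ hs₀) diam_nonneg)⟩
end

section
/- Let S ⊂ ℝⁿ be a well-centered convex body with inner John ellipsoid E, coordinates along the principal axes of E with semi-axis lengths a¹,…,aⁿ > 0, and R_n = {x ∈ ℝⁿ : |xⁱ| ≤ n aⁱ for i = 1,…,n}. Then for every line ℓ through the origin, diam(ℓ ∩ R_n) ≤ n^(3/2) · diam(ℓ ∩ S). -/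
/-!
On the box `|xⁱ| ≤ r aⁱ` each of the `n` squares `(xⁱ / aⁱ)²` is at most `r²`, so the box lies in
the dilate of the ellipsoid, hence of `S`, by the factor `r √n`, which is `n^(3/2)` for `r = n`.
A linear subspace is invariant under dilations, so its section of the box lies in the same dilate
of its section of `S`.
-/

open Metric Set
open scoped RealInnerProductSpace Pointwise

section Subspace

variable {𝕜 V : Type*}

theorem coe_submodule_inter_smul_set [DivisionRing 𝕜] [AddCommGroup V] [Module 𝕜 V]
    (L : Submodule 𝕜 V) {c : 𝕜} (hc : c ≠ 0) (s : Set V) :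
    (L : Set V) ∩ c • s = c • ((L : Set V) ∩ s) := by
  ext x
  simp only [mem_inter_iff, mem_smul_set_iff_inv_smul_mem₀ hc, SetLike.mem_coe,
    L.smul_mem_iff (inv_ne_zero hc)]

theorem diam_submodule_inter_le_of_subset_smul [NormedDivisionRing 𝕜] [SeminormedAddCommGroup V]
    [Module 𝕜 V] [NormSMulClass 𝕜 V] (L : Submodule 𝕜 V) {c : 𝕜} (hc : c ≠ 0) {s t : Set V}
    (ht : Bornology.IsBounded t) (hst : s ⊆ c • t) :
    diam ((L : Set V) ∩ s) ≤ ‖c‖ * diam ((L : Set V) ∩ t) := by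
  have hsection : (L : Set V) ∩ s ⊆ c • ((L : Set V) ∩ t) := by
    rw [← coe_submodule_inter_smul_set L hc]
    exact inter_subset_inter_right _ hst
  have hbdd : Bornology.IsBounded (c • ((L : Set V) ∩ t)) :=
    (lipschitzWith_smul c).isBounded_image (ht.subset inter_subset_right)
  calc diam ((L : Set V) ∩ s)
      ≤ diam (c • ((L : Set V) ∩ t)) := diam_mono hsection hbdd
    _ = ‖c‖ * diam ((L : Set V) ∩ t) := diam_smul₀ c _

end Subspace

section EllipsoidBox

variable {ι : Type*}

/-- The solid ellipsoid centered at the origin whose principal axes are the coordinate axes, with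
semi-axis lengths `a i` (meaningful for `a i ≠ 0`, since division by zero gives zero). -/
def axisEllipsoid [Fintype ι] (a : ι → ℝ) : Set (EuclideanSpace ℝ ι) :=
  {x | ∑ i, (x i / a i) ^ 2 ≤ 1}

/-- The solid box centered at the origin with sides parallel to the coordinate axes, of
half-widths `b i`. -/
def axisBox (b : ι → ℝ) : Set (EuclideanSpace ℝ ι) :=
  {x | ∀ i, |x i| ≤ b i}

theorem mem_smul_axisEllipsoid [Fintype ι] {a : ι → ℝ} {c : ℝ} (hc : c ≠ 0)
    {x : EuclideanSpace ℝ ι} :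
    x ∈ c • axisEllipsoid a ↔ ∑ i, (x i / a i) ^ 2 ≤ c ^ 2 := by
  have hscale : ∑ i, ((c⁻¹ • x) i / a i) ^ 2 = (∑ i, (x i / a i) ^ 2) / c ^ 2 := by
    rw [Finset.sum_div]
    refine Finset.sum_congr rfl fun i _ => ?_
    rw [PiLp.smul_apply, smul_eq_mul]
    ring
  rw [mem_smul_set_iff_inv_smul_mem₀ hc, axisEllipsoid, mem_ofPred_eq, hscale,
    div_le_one (by positivity)]

theorem sq_div_le_sq_of_mem_axisBox {a : ι → ℝ} {r : ℝ} {x : EuclideanSpace ℝ ι}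
    (hx : x ∈ axisBox fun j => r * a j) {i : ι} (hi : 0 < a i) :
    (x i / a i) ^ 2 ≤ r ^ 2 := by
  have habs : |x i / a i| ≤ r := by
    rw [abs_div, abs_of_pos hi, div_le_iff₀ hi]
    exact hx i
  exact sq_le_sq' (abs_le.mp habs).1 (abs_le.mp habs).2

variable [Fintype ι] [Nonempty ι]

theorem axisBox_subset_smul_axisEllipsoid {a : ι → ℝ} (ha : ∀ i, 0 < a i) {r : ℝ} (hr : r ≠ 0) :
    axisBox (fun i => r * a i) ⊆ (r * √(Fintype.card ι)) • axisEllipsoid a := by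
  intro x hx
  rw [mem_smul_axisEllipsoid (by positivity)]
  calc ∑ i, (x i / a i) ^ 2
      ≤ ∑ _i : ι, r ^ 2 := Finset.sum_le_sum fun i _ => sq_div_le_sq_of_mem_axisBox hx (ha i)
    _ = Fintype.card ι * r ^ 2 := by
      rw [Finset.sum_const, Finset.card_univ, nsmul_eq_mul]
    _ = (r * √(Fintype.card ι)) ^ 2 := by
      rw [mul_pow, Real.sq_sqrt (Nat.cast_nonneg _), mul_comm]

theorem statement2_general {S : Set (EuclideanSpace ℝ ι)} (hS : Bornology.IsBounded S)
    {a : ι → ℝ} (ha : ∀ i, 0 < a i) (haS : axisEllipsoid a ⊆ S) {r : ℝ} (hr : 0 < r)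
    (L : Submodule ℝ (EuclideanSpace ℝ ι)) :
    diam ((L : Set (EuclideanSpace ℝ ι)) ∩ axisBox fun i => r * a i) ≤
      r * √(Fintype.card ι) * diam ((L : Set (EuclideanSpace ℝ ι)) ∩ S) := by
  have hc : 0 < r * √(Fintype.card ι) := by positivity
  have hbox : axisBox (fun i => r * a i) ⊆ (r * √(Fintype.card ι)) • S :=
    (axisBox_subset_smul_axisEllipsoid ha hr.ne').trans (smul_set_mono haS)
  simpa only [Real.norm_of_nonneg hc.le] using
    diam_submodule_inter_le_of_subset_smul L hc.ne' hS hbox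

end EllipsoidBox

theorem rpow_three_halves_eq_mul_sqrt {x : ℝ} (hx : 0 ≤ x) : x ^ ((3 : ℝ) / 2) = x * √x := by
  rw [show (3 : ℝ) / 2 = 1 + 1 / 2 by norm_num, Real.rpow_add_of_nonneg hx (by norm_num)
    (by norm_num), Real.rpow_one, Real.sqrt_eq_rpow]

/-- Let `S ⊂ ℝⁿ` be a well-centered convex body with inner John
ellipsoid `E = {x | ∑ i, (xⁱ/aⁱ)² ≤ 1}` (`aⁱ > 0`, `E ⊆ S ⊆ n • E`), and
`R_n = {x | ∀ i, |xⁱ| ≤ n aⁱ}`.  Then for every line `ℓ` through the origin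
(the span of some `v ≠ 0`), `diam (ℓ ∩ R_n) ≤ n^(3/2) · diam (ℓ ∩ S)`. -/
theorem statement2 (n : ℕ) (hn : 1 ≤ n)
    (S : Set (EuclideanSpace ℝ (Fin n)))
    (hScomp : IsCompact S) (hSconv : Convex ℝ S) (hSint : (interior S).Nonempty)
    (a : Fin n → ℝ) (ha : ∀ i, 0 < a i)
    (E : Set (EuclideanSpace ℝ (Fin n)))
    (hE : E = {x | ∑ i, (x i / a i) ^ 2 ≤ 1})
    (hES : E ⊆ S) (hSE : S ⊆ (n : ℝ) • E)
    (R : Set (EuclideanSpace ℝ (Fin n)))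
    (hR : R = {x | ∀ i, |x i| ≤ n * a i})
    (v : EuclideanSpace ℝ (Fin n)) (hv : v ≠ 0) :
    diam ((Submodule.span ℝ {v} : Set (EuclideanSpace ℝ (Fin n))) ∩ R) ≤
      (n : ℝ) ^ ((3 : ℝ) / 2) *
        diam ((Submodule.span ℝ {v} : Set (EuclideanSpace ℝ (Fin n))) ∩ S) := by
  subst hE hR
  have : NeZero n := ⟨Nat.one_le_iff_ne_zero.mp hn⟩
  have hdiam := statement2_general hScomp.isBounded ha hES (Nat.cast_pos.mpr hn)
    (Submodule.span ℝ {v})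
  rwa [Fintype.card_fin, ← rpow_three_halves_eq_mul_sqrt n.cast_nonneg] at hdiam
end

section
/- Let k ≥ 2, let π : ℝᵏ → ℝ^(k−1) be the projection onto the first k−1 coordinates, let r ∈ ℝᵏ with rᵏ > 0 and π(r) ≠ 0, let 0 < a ≤ c, and set r' = λ π(r) with λ = (|r|² + c rᵏ)/|π(r)|². If x ∈ ℝᵏ satisfies x·r < |r|² and xᵏ > −a, then π(x)·r' < |r'|². (Consequently, if a convex body S lies in the half-space {x·r ≤ |r|²} and its interior lies in {xᵏ > −a}, then the projected hyperplane {x' : x'·r' = |r'|²} does not meet the projection of the interior of S.) -/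
/-!
Splitting off the last coordinate gives `⟪π x, π r⟫ = ⟪x, r⟫ - xᵏ rᵏ < ‖r‖² + c rᵏ`, and `λ` is
chosen so that the right-hand side is `λ ‖π r‖²`. Multiplying by `λ > 0` gives the claim.
Geometrically, the hyperplane `⟪·, r'⟫ = ‖r'‖²` is the projection of the intersection of the
hyperplanes `⟪·, r⟫ = ‖r‖²` and `xᵏ = -c`.
-/

open Metric Set
open scoped RealInnerProductSpace Pointwise

theorem inner_eq_inner_castSucc_add_inner_last {𝕜 : Type*} [RCLike 𝕜] {n : ℕ}
    {x y : EuclideanSpace 𝕜 (Fin (n + 1))} {x' y' : EuclideanSpace 𝕜 (Fin n)}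
    (hx : ∀ i, x' i = x i.castSucc) (hy : ∀ i, y' i = y i.castSucc) :
    inner 𝕜 x y = inner 𝕜 x' y' + inner 𝕜 (x (Fin.last n)) (y (Fin.last n)) := by
  simp only [PiLp.inner_apply, Fin.sum_univ_castSucc, hx, hy]

theorem inner_smul_lt_norm_smul_sq_iff {F : Type*} [SeminormedAddCommGroup F]
    [InnerProductSpace ℝ F] {d : ℝ} (hd : 0 < d) {p y : F} :
    ⟪y, d • p⟫ < ‖d • p‖ ^ 2 ↔ ⟪y, p⟫ < d * ‖p‖ ^ 2 := by
  have norm_smul_sq : ‖d • p‖ ^ 2 = d * (d * ‖p‖ ^ 2) := by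
    rw [norm_smul, Real.norm_of_nonneg hd.le]
    ring
  rw [real_inner_smul_right, norm_smul_sq, mul_lt_mul_iff_right₀ hd]

/-- By `hsplit`, `z ↦ (π z, t z)` preserves inner products into the Hilbert sum of `F` and `ℝ`;
in the case of `ℝᵏ`, `t` is the last coordinate. -/
theorem statement9_general {E F : Type*} [SeminormedAddCommGroup E] [InnerProductSpace ℝ E]
    [NormedAddCommGroup F] [InnerProductSpace ℝ F] {π : E → F} {t : E → ℝ}
    (hsplit : ∀ x y, ⟪x, y⟫ = ⟪π x, π y⟫ + ⟪t x, t y⟫)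
    {r : E} (hr : 0 ≤ t r) (hπr : π r ≠ 0) {c : ℝ} (hc : 0 < ‖r‖ ^ 2 + c * t r)
    {lam : ℝ} (hlam : lam = (‖r‖ ^ 2 + c * t r) / ‖π r‖ ^ 2)
    {r' : F} (hr' : r' = lam • π r)
    {x : E} (hxr : ⟪x, r⟫ < ‖r‖ ^ 2) (hx : -c ≤ t x) :
    ⟪π x, r'⟫ < ‖r'‖ ^ 2 := by
  have norm_sq_pos : 0 < ‖π r‖ ^ 2 := pow_pos (norm_pos_iff.mpr hπr) 2
  have lam_pos : 0 < lam := hlam ▸ div_pos hc norm_sq_pos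
  have height_le : -c * t r ≤ ⟪t x, t r⟫ := by
    rw [Real.inner_apply]
    exact mul_le_mul_of_nonneg_right hx hr
  rw [hr', inner_smul_lt_norm_smul_sq_iff lam_pos, hlam, div_mul_cancel₀ _ norm_sq_pos.ne']
  linarith [hsplit x r]

/-- Let `k ≥ 2`, let `π : ℝᵏ → ℝ^(k-1)` be the projection onto
the first `k-1` coordinates, let `r ∈ ℝᵏ` with last coordinate `rᵏ > 0` and
`π r ≠ 0`, let `0 < a ≤ c`, and set `r' = λ • π r` with
`λ = (‖r‖² + c rᵏ)/‖π r‖²`.  If `x ∈ ℝᵏ` satisfies `⟪x, r⟫ < ‖r‖²` and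
`xᵏ > -a`, then `⟪π x, r'⟫ < ‖r'‖²`. -/
theorem statement9 (k : ℕ) (hk : 2 ≤ k)
    (π : EuclideanSpace ℝ (Fin k) → EuclideanSpace ℝ (Fin (k - 1)))
    (hπ : ∀ x (i : Fin (k - 1)), π x i = x (Fin.castLE (Nat.sub_le k 1) i))
    (r : EuclideanSpace ℝ (Fin k))
    (hrk : 0 < r ⟨k - 1, by omega⟩) (hπr : π r ≠ 0)
    (a c : ℝ) (ha : 0 < a) (hac : a ≤ c)
    (lam : ℝ) (hlam : lam = (‖r‖ ^ 2 + c * r ⟨k - 1, by omega⟩) / ‖π r‖ ^ 2)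
    (r' : EuclideanSpace ℝ (Fin (k - 1))) (hr' : r' = lam • π r)
    (x : EuclideanSpace ℝ (Fin k))
    (hx1 : ⟪x, r⟫ < ‖r‖ ^ 2) (hx2 : -a < x ⟨k - 1, by omega⟩) :
    ⟪π x, r'⟫ < ‖r'‖ ^ 2 := by
  obtain ⟨n, rfl⟩ := Nat.exists_eq_add_of_le' (one_le_two.trans hk)
  exact statement9_general (t := fun y ↦ y (Fin.last n))
    (fun y z ↦ inner_eq_inner_castSucc_add_inner_last (hπ y) (hπ z)) hrk.le hπr
    (add_pos_of_nonneg_of_pos (sq_nonneg _) (mul_pos (ha.trans_le hac) hrk)) hlam hr' hx1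
    ((neg_le_neg hac).trans hx2.le)
end

section
/- Let k ≥ 2, b¹,…,bᵏ > 0, R = {x ∈ ℝᵏ : |xⁱ| ≤ bⁱ for all i}, and let π : ℝᵏ → ℝ^(k−1) be the projection onto the first k−1 coordinates. Let P ⊂ ℝᵏ be a hyperplane not through the origin with foot of perpendicular r, and suppose rᵏ > 0 and the point r⁺ = (bᵏ/rᵏ) r lies in R (i.e. the segment [0, r] exits R through the face {xᵏ = bᵏ}). Let γ ∈ (0,1) and assume |r⁺| ≤ γ |r|. Let p ∈ P ∩ R with π(p) ≠ 0, let y ∈ [0, p], let T be the 2-dimensional subspace spanned by the k-th coordinate vector e_k and p, let ℓ = T ∩ P (assumed to be a line meeting Q⁻ = {x : xᵏ = −bᵏ} in a single point q⁻), and set p' = π(q⁻). Then π(p) lies on the segment [0, p'], and p' ∈ (1 + 2γ/(1−γ)) · π(R), i.e. |(p')ⁱ| ≤ (1 + 2γ/(1−γ)) bⁱ for i = 1,…,k−1. In particular π(y) ∈ [0, p']. -/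
open Metric Set
open scoped RealInnerProductSpace Pointwise

/-!
Let `e` be the `k`-th coordinate vector, `B = bᵏ`, and write `q⁻ = a • e + c • p`. Since `π` kills
`e`, it maps `q⁻` to `c • π p`, so everything reduces to `1 ≤ c ≤ (1 + γ) / (1 - γ)`. Eliminating
`a` from `⟪q⁻, r⟫ = ‖r‖²` and `⟪e, q⁻⟫ = -B` gives `c * (‖r‖² - ⟪e, p⟫⟪e, r⟫) = ‖r‖² + B⟪e, r⟫`,
where `|⟪e, p⟫⟪e, r⟫| ≤ B⟪e, r⟫` because `p ∈ R`, and `B⟪e, r⟫ ≤ γ‖r‖²` because `‖r⁺‖ ≤ γ‖r‖`.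
-/

section Coefficient

lemma mem_Icc_of_mul_sub_eq_add {N u v γ c : ℝ} (hN : 0 < N) (hγ : γ < 1) (hv : |v| ≤ u)
    (hu : u ≤ γ * N) (hc : c * (N - v) = N + u) : c ∈ Icc 1 (1 + 2 * γ / (1 - γ)) := by
  obtain ⟨hnegv, hvu⟩ := abs_le.mp hv
  have hγ' : 0 < 1 - γ := sub_pos.mpr hγ
  have hden : (1 - γ) * N ≤ N - v := by linarith
  have hden_pos : 0 < N - v := (mul_pos hγ' hN).trans_le hden
  have hc_eq : c = (N + u) / (N - v) := eq_div_of_mul_eq hden_pos.ne' hc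
  constructor
  · rw [hc_eq, one_le_div hden_pos]
    linarith
  · calc
      c = (N + u) / (N - v) := hc_eq
      _ ≤ ((1 + γ) * N) / ((1 - γ) * N) :=
        div_le_div₀ (by linarith [abs_nonneg v]) (by linarith) (mul_pos hγ' hN) hden
      _ = 1 + 2 * γ / (1 - γ) := by
        field_simp
        ring

variable {E : Type*} [NormedAddCommGroup E] [InnerProductSpace ℝ E] {e r p q : E} {B γ : ℝ}

lemma mul_inner_le_of_norm_smul_le (he : ‖e‖ ≤ 1) (hB : 0 ≤ B) (her : 0 < ⟪e, r⟫)
    (hr : ‖(B / ⟪e, r⟫) • r‖ ≤ γ * ‖r‖) : B * ⟪e, r⟫ ≤ γ * ‖r‖ ^ 2 := by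
  have her_le : ⟪e, r⟫ ≤ ‖r‖ :=
    (real_inner_le_norm e r).trans (mul_le_of_le_one_left (norm_nonneg r) he)
  have hratio : 0 ≤ B / ⟪e, r⟫ := div_nonneg hB her.le
  calc
    B * ⟪e, r⟫ = B / ⟪e, r⟫ * ⟪e, r⟫ ^ 2 := by field_simp
    _ ≤ B / ⟪e, r⟫ * ‖r‖ ^ 2 := by gcongr
    _ = ‖(B / ⟪e, r⟫) • r‖ * ‖r‖ := by
      rw [norm_smul, Real.norm_of_nonneg hratio]
      ring
    _ ≤ γ * ‖r‖ * ‖r‖ := by gcongr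
    _ = γ * ‖r‖ ^ 2 := by ring

lemma mul_sub_inner_mul_inner_eq {a c : ℝ} (he : ‖e‖ = 1) (hp : ⟪p, r⟫ = ‖r‖ ^ 2)
    (hqr : ⟪a • e + c • p, r⟫ = ‖r‖ ^ 2) (hqe : ⟪e, a • e + c • p⟫ = -B) :
    c * (‖r‖ ^ 2 - ⟪e, p⟫ * ⟪e, r⟫) = ‖r‖ ^ 2 + B * ⟪e, r⟫ := by
  simp only [inner_add_left, real_inner_smul_left, hp] at hqr
  simp only [inner_add_right, real_inner_smul_right, real_inner_self_eq_norm_sq, he] at hqe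
  linear_combination hqr - ⟪e, r⟫ * hqe

lemma exists_mem_Icc_eq_smul_add_smul (he : ‖e‖ = 1) (her : 0 < ⟪e, r⟫) (hγ : γ < 1)
    (hr : ‖(B / ⟪e, r⟫) • r‖ ≤ γ * ‖r‖) (hpr : ⟪p, r⟫ = ‖r‖ ^ 2) (hpe : |⟪e, p⟫| ≤ B)
    (hq : q ∈ Submodule.span ℝ {e, p}) (hqr : ⟪q, r⟫ = ‖r‖ ^ 2) (hqe : ⟪e, q⟫ = -B) :
    ∃ c ∈ Icc 1 (1 + 2 * γ / (1 - γ)), ∃ a : ℝ, q = a • e + c • p := by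
  obtain ⟨a, c, rfl⟩ := Submodule.mem_span_pair.mp hq
  have hr0 : r ≠ 0 := by
    rintro rfl
    simp at her
  have hpe_er : |⟪e, p⟫ * ⟪e, r⟫| ≤ B * ⟪e, r⟫ := by
    rw [abs_mul, abs_of_pos her]
    gcongr
  have hB_er : B * ⟪e, r⟫ ≤ γ * ‖r‖ ^ 2 :=
    mul_inner_le_of_norm_smul_le he.le ((abs_nonneg _).trans hpe) her hr
  exact ⟨c, mem_Icc_of_mul_sub_eq_add (by positivity) hγ hpe_er hB_er
    (mul_sub_inner_mul_inner_eq he hpr hqr hqe), a, rfl⟩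

end Coefficient

lemma segment_zero_subset_segment_zero_smul {𝕜 V : Type*} [Field 𝕜] [LinearOrder 𝕜]
    [IsStrictOrderedRing 𝕜] [AddCommGroup V] [Module 𝕜 V] {c : 𝕜} (hc : 1 ≤ c) (x : V) :
    segment 𝕜 0 x ⊆ segment 𝕜 0 (c • x) := by
  have hc_pos : 0 < c := one_pos.trans_le hc
  have hstar : StarConvex 𝕜 0 (segment 𝕜 0 (c • x)) :=
    (convex_segment _ _).starConvex (left_mem_segment 𝕜 _ _)
  have hx : c⁻¹ • c • x ∈ segment 𝕜 0 (c • x) :=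
    hstar.smul_mem (right_mem_segment 𝕜 _ _) (inv_nonneg.mpr hc_pos.le) (inv_le_one_of_one_le₀ hc)
  rw [inv_smul_smul₀ hc_pos.ne'] at hx
  exact hstar.segment_subset hx

lemma isLinearMap_of_forall_apply_eq {𝕜 ι κ : Type*} [RCLike 𝕜] {f : κ → ι}
    {π : EuclideanSpace 𝕜 ι → EuclideanSpace 𝕜 κ} (hπ : ∀ x j, π x j = x (f j)) :
    IsLinearMap 𝕜 π where
  map_add x y := by ext j; simp [hπ]
  map_smul t x := by ext j; simp [hπ]

theorem statement10_general {ι κ : Type*} [Fintype ι] [DecidableEq ι] {l : ι} {f : κ → ι}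
    (hf : ∀ j, f j ≠ l) {π : EuclideanSpace ℝ ι → EuclideanSpace ℝ κ}
    (hπ : ∀ x j, π x j = x (f j)) {b : ι → ℝ} {γ : ℝ} (hγ : γ < 1)
    {r p q y : EuclideanSpace ℝ ι} (hrl : 0 < r l) (hr : ‖(b l / r l) • r‖ ≤ γ * ‖r‖)
    (hpr : ⟪p, r⟫ = ‖r‖ ^ 2) (hpb : ∀ i, |p i| ≤ b i) (hy : y ∈ segment ℝ 0 p)
    (hq : q ∈ Submodule.span ℝ {EuclideanSpace.single l (1 : ℝ), p})
    (hqr : ⟪q, r⟫ = ‖r‖ ^ 2) (hql : q l = -b l) :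
    π p ∈ segment ℝ 0 (π q) ∧ (∀ j, |π q j| ≤ (1 + 2 * γ / (1 - γ)) * b (f j)) ∧
      π y ∈ segment ℝ 0 (π q) := by
  have inner_single (x : EuclideanSpace ℝ ι) : ⟪EuclideanSpace.single l (1 : ℝ), x⟫ = x l := by
    simp [EuclideanSpace.inner_single_left]
  obtain ⟨c, ⟨hc_one, hc_le⟩, a, hq_eq⟩ :=
    exists_mem_Icc_eq_smul_add_smul (e := EuclideanSpace.single l (1 : ℝ)) (by simp)
      (by rwa [inner_single]) hγ (by rwa [inner_single]) hpr (by rw [inner_single]; exact hpb l)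
      hq hqr (by rwa [inner_single])
  have hπq : π q = c • π p := by
    ext j
    simp [hπ, hq_eq, hf j]
  have hsub : segment ℝ 0 (π p) ⊆ segment ℝ 0 (π q) :=
    hπq ▸ segment_zero_subset_segment_zero_smul hc_one (π p)
  have hπy : π y ∈ segment ℝ 0 (π p) := by
    have hlin : IsLinearMap ℝ π := isLinearMap_of_forall_apply_eq hπ
    have himage : π '' segment ℝ 0 p = segment ℝ (π 0) (π p) :=
      image_segment ℝ (hlin.mk' π).toAffineMap 0 p
    rw [← hlin.map_zero, ← himage]
    exact mem_image_of_mem π hy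
  refine ⟨hsub (right_mem_segment ℝ _ _), fun j ↦ ?_, hsub hπy⟩
  calc
    |π q j| = c * |p (f j)| := by
      simp [hπq, hπ, abs_mul, abs_of_pos (one_pos.trans_le hc_one)]
    _ ≤ (1 + 2 * γ / (1 - γ)) * b (f j) :=
      mul_le_mul hc_le (hpb (f j)) (abs_nonneg _) (by linarith)

/-- Let `k ≥ 2`, `b¹, …, bᵏ > 0`,
`R = {x ∈ ℝᵏ | ∀ i, |xⁱ| ≤ bⁱ}`, and let `π : ℝᵏ → ℝ^(k-1)` be the projection
onto the first `k-1` coordinates.  Let `P = {x | ⟪x, r⟫ = ‖r‖²}` be a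
hyperplane not through the origin with foot of perpendicular `r ≠ 0`, with
`rᵏ > 0` and `r⁺ = (bᵏ/rᵏ) • r ∈ R`.  Let `γ ∈ (0,1)` with `‖r⁺‖ ≤ γ ‖r‖`.
Let `p ∈ P ∩ R` with `π p ≠ 0`, `y ∈ [0, p]`, let `T` be the span of the
`k`-th coordinate vector `e_k` and `p`, and suppose `ℓ = T ∩ P` meets
`Q⁻ = {x | xᵏ = -bᵏ}` in the single point `q⁻`; set `p' = π q⁻`.  Then
`π p ∈ [0, p']`, `|p'ⁱ| ≤ (1 + 2γ/(1-γ)) bⁱ` for all `i`, and `π y ∈ [0, p']`. -/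
theorem statement10 (k : ℕ) (hk : 2 ≤ k)
    (b : Fin k → ℝ) (hb : ∀ i, 0 < b i)
    (R : Set (EuclideanSpace ℝ (Fin k)))
    (hR : R = {x | ∀ i, |x i| ≤ b i})
    (π : EuclideanSpace ℝ (Fin k) → EuclideanSpace ℝ (Fin (k - 1)))
    (hπ : ∀ x (i : Fin (k - 1)), π x i = x (Fin.castLE (Nat.sub_le k 1) i))
    (r : EuclideanSpace ℝ (Fin k)) (hr : r ≠ 0)
    (hrk : 0 < r ⟨k - 1, by omega⟩)
    (rp : EuclideanSpace ℝ (Fin k))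
    (hrpdef : rp = (b ⟨k - 1, by omega⟩ / r ⟨k - 1, by omega⟩) • r)
    (hrpR : rp ∈ R)
    (γ : ℝ) (hγ0 : 0 < γ) (hγ1 : γ < 1) (hrpγ : ‖rp‖ ≤ γ * ‖r‖)
    (p : EuclideanSpace ℝ (Fin k)) (hpP : ⟪p, r⟫ = ‖r‖ ^ 2) (hpR : p ∈ R)
    (hπp : π p ≠ 0)
    (y : EuclideanSpace ℝ (Fin k)) (hy : y ∈ segment ℝ 0 p)
    (T : Submodule ℝ (EuclideanSpace ℝ (Fin k)))
    (hT : T = Submodule.span ℝ {EuclideanSpace.single ⟨k - 1, by omega⟩ (1 : ℝ), p})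
    (qm : EuclideanSpace ℝ (Fin k))
    (hqm : (T : Set (EuclideanSpace ℝ (Fin k))) ∩
        {x : EuclideanSpace ℝ (Fin k) | ⟪x, r⟫ = ‖r‖ ^ 2} ∩
        {x : EuclideanSpace ℝ (Fin k) | x ⟨k - 1, by omega⟩ = -(b ⟨k - 1, by omega⟩)} =
      {qm})
    (p' : EuclideanSpace ℝ (Fin (k - 1))) (hp' : p' = π qm) :
    π p ∈ segment ℝ 0 p' ∧
    (∀ i : Fin (k - 1), |p' i| ≤ (1 + 2 * γ / (1 - γ)) * b (Fin.castLE (Nat.sub_le k 1) i)) ∧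
    π y ∈ segment ℝ 0 p' := by
  subst hR hT hrpdef hp'
  obtain ⟨⟨hqT, hqP⟩, hqQ⟩ := hqm.ge rfl
  exact statement10_general (fun i ↦ Fin.ne_of_lt i.isLt) hπ hγ1 hrk hrpγ hpP hpR hy hqT hqP hqQ
end

section
/- Let k ≥ 2, b¹,…,bᵏ > 0, R = {x ∈ ℝᵏ : |xⁱ| ≤ bⁱ for all i}, and let π : ℝᵏ → ℝ^(k−1) be the projection onto the first k−1 coordinates. Let P ⊂ ℝᵏ be a hyperplane not through the origin with foot of perpendicular r, with rᵏ > 0 and r⁺ = (bᵏ/rᵏ) r ∈ R. Let γ ∈ (0,1) with |r⁺| ≤ γ |r|, and let δ ≥ 0. Let p ∈ P ∩ R with π(p) ≠ 0 and y ∈ [0, p] with dist(y, P) ≤ δ · dist(0, P). Let T be the 2-dimensional subspace spanned by the k-th coordinate vector e_k and p, let ℓ = T ∩ P (assumed to meet {xᵏ = −bᵏ} in a single point q⁻), and let P' = π(P ∩ {x : xᵏ = −bᵏ}), a hyperplane in ℝ^(k−1). Then dist(π(y), P') ≤ (δ + 2γ) · dist(0, P'). -/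
open Metric Set
open scoped RealInnerProductSpace Pointwise

/-!
Split `ℝᵏ` orthogonally into the first `k - 1` coordinates and the height `xᵏ`.  The slice of `P`
at height `-bᵏ` projects onto the hyperplane `P' = {z | ⟪z, π r⟫ = ‖r‖² + bᵏ rᵏ}`.  The point
`y = t p` satisfies `dist(y, P) = (1 - t) dist(0, P)`, so `1 - t ≤ δ`.  Moving a point of `P` from
height `pᵏ` to height `-bᵏ` changes `⟪·, π r⟫` by
`(pᵏ + bᵏ) rᵏ ≤ 2 bᵏ rᵏ ≤ 2 γ (rᵏ)² ≤ 2 γ ‖r‖²`, which gives `dist(π p, P') ≤ 2 γ dist(0, P')`.  As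
the distance to `P'` is convex along `[0, π p]`, the two estimates add up.
-/

lemma convexOn_infDist {E : Type*} [SeminormedAddCommGroup E] [NormedSpace ℝ E] {s : Set E}
    (hs : Convex ℝ s) : ConvexOn ℝ univ fun x => infDist x s := by
  refine ⟨convex_univ, fun x _ y _ a b ha hb hab => le_of_forall_pos_le_add fun ε hε => ?_⟩
  rcases s.eq_empty_or_nonempty with rfl | hne
  · simpa using hε.le
  obtain ⟨u, hu, hxu⟩ := (infDist_lt_iff hne).1 (lt_add_of_pos_right (infDist x s) hε)
  obtain ⟨v, hv, hyv⟩ := (infDist_lt_iff hne).1 (lt_add_of_pos_right (infDist y s) hε)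
  calc infDist (a • x + b • y) s
      ≤ dist (a • x + b • y) (a • u + b • v) := infDist_le_dist_of_mem (hs hu hv ha hb hab)
    _ ≤ dist (a • x) (a • u) + dist (b • y) (b • v) := dist_add_add_le _ _ _ _
    _ = a * dist x u + b * dist y v := by
      rw [dist_smul₀, dist_smul₀, Real.norm_of_nonneg ha, Real.norm_of_nonneg hb]
    _ ≤ a * (infDist x s + ε) + b * (infDist y s + ε) := by gcongr
    _ = a • infDist x s + b • infDist y s + ε := by
      simp only [smul_eq_mul]
      linear_combination ε * hab

lemma le_mul_of_norm_div_smul_le {E : Type*} [NormedAddCommGroup E] [NormedSpace ℝ E] {x : E}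
    {a b c : ℝ} (hx : x ≠ 0) (hb : 0 < b) (h : ‖(a / b) • x‖ ≤ c * ‖x‖) : a ≤ c * b := by
  rw [norm_smul] at h
  exact (div_le_iff₀ hb).1 <|
    (Real.le_norm_self _).trans (le_of_mul_le_mul_right h (norm_pos_iff.2 hx))

section Hyperplane

variable {E : Type*} [NormedAddCommGroup E] [InnerProductSpace ℝ E] {a : E} {c : ℝ}

lemma sub_smul_mem_hyperplane (ha : a ≠ 0) (c : ℝ) (x : E) :
    x - ((⟪x, a⟫ - c) / ‖a‖ ^ 2) • a ∈ {z : E | ⟪z, a⟫ = c} := by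
  have hn : ‖a‖ ≠ 0 := norm_ne_zero_iff.2 ha
  rw [mem_ofPred_eq, inner_sub_left, real_inner_smul_left, real_inner_self_eq_norm_sq,
    div_mul_cancel₀ _ (pow_ne_zero 2 hn), sub_sub_cancel]

lemma infDist_hyperplane (ha : a ≠ 0) (c : ℝ) (x : E) :
    infDist x {z : E | ⟪z, a⟫ = c} = |⟪x, a⟫ - c| / ‖a‖ := by
  have hn : 0 < ‖a‖ := norm_pos_iff.2 ha
  have hfoot := sub_smul_mem_hyperplane ha c x
  apply le_antisymm
  · calc infDist x {z : E | ⟪z, a⟫ = c}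
        ≤ dist x (x - ((⟪x, a⟫ - c) / ‖a‖ ^ 2) • a) := infDist_le_dist_of_mem hfoot
      _ = |⟪x, a⟫ - c| / ‖a‖ := by
        rw [dist_eq_norm, sub_sub_cancel, norm_smul, Real.norm_eq_abs, abs_div,
          abs_of_pos (pow_pos hn 2)]
        field_simp
  · refine (le_infDist ⟨_, hfoot⟩).2 fun z (hz : ⟪z, a⟫ = c) => (div_le_iff₀ hn).2 ?_
    calc |⟪x, a⟫ - c| = |⟪x - z, a⟫| := by rw [inner_sub_left, hz]
      _ ≤ ‖x - z‖ * ‖a‖ := abs_real_inner_le_norm _ _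
      _ = dist x z * ‖a‖ := by rw [dist_eq_norm]

lemma convex_hyperplane_inner (a : E) (c : ℝ) : Convex ℝ {z : E | ⟪z, a⟫ = c} :=
  convex_hyperplane (f := fun z => ⟪z, a⟫)
    ⟨fun _ _ => inner_add_left _ _ _, fun _ _ => real_inner_smul_left _ _ _⟩ c

lemma infDist_smul_hyperplane (ha : a ≠ 0) {p : E} (hp : ⟪p, a⟫ = c) (t : ℝ) :
    infDist (t • p) {z : E | ⟪z, a⟫ = c} = |1 - t| * infDist 0 {z : E | ⟪z, a⟫ = c} := by
  rw [infDist_hyperplane ha, infDist_hyperplane ha, real_inner_smul_left, hp, inner_zero_left,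
    ← mul_div_assoc, ← abs_mul]
  congr 2
  ring

lemma one_sub_le_of_infDist_smul_hyperplane_le (ha : a ≠ 0) (hc : c ≠ 0) {p : E}
    (hp : ⟪p, a⟫ = c) {t δ : ℝ}
    (h : infDist (t • p) {z : E | ⟪z, a⟫ = c} ≤ δ * infDist 0 {z : E | ⟪z, a⟫ = c}) :
    1 - t ≤ δ := by
  have hpos : 0 < infDist 0 {z : E | ⟪z, a⟫ = c} := by
    rw [infDist_hyperplane ha, inner_zero_left, zero_sub, abs_neg]
    exact div_pos (abs_pos.2 hc) (norm_pos_iff.2 ha)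
  rw [infDist_smul_hyperplane ha hp] at h
  exact (le_abs_self _).trans (le_of_mul_le_mul_right h hpos)

end Hyperplane

section Height

variable {E F : Type*} [NormedAddCommGroup E] [InnerProductSpace ℝ E] [NormedAddCommGroup F]
  [InnerProductSpace ℝ F] (φ : E ≃ₗᵢ[ℝ] WithLp 2 (F × ℝ)) {r p y : E} {β γ δ : ℝ}

lemma inner_eq_inner_fst_add_snd_mul_snd (x z : E) :
    ⟪x, z⟫ = ⟪(φ x).fst, (φ z).fst⟫ + (φ x).snd * (φ z).snd := by
  rw [← φ.inner_map_map, WithLp.prod_inner_apply, mul_comm]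
  rfl

lemma image_fst_hyperplane_inter_snd_eq (r : E) (a c : ℝ) :
    (fun x => (φ x).fst) '' ({x | ⟪x, r⟫ = a} ∩ {x | (φ x).snd = c}) =
      {z | ⟪z, (φ r).fst⟫ = a - c * (φ r).snd} := by
  ext z
  constructor
  · rintro ⟨x, ⟨hxa : ⟪x, r⟫ = a, rfl⟩, rfl⟩
    exact eq_sub_of_add_eq ((inner_eq_inner_fst_add_snd_mul_snd φ x r).symm.trans hxa)
  · intro (hz : ⟪z, (φ r).fst⟫ = a - c * (φ r).snd)
    refine ⟨φ.symm (WithLp.toLp 2 (z, c)), ⟨?_, ?_⟩, ?_⟩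
    · rw [mem_ofPred_eq, inner_eq_inner_fst_add_snd_mul_snd φ, φ.apply_symm_apply]
      exact add_eq_of_eq_sub hz
    all_goals simp

lemma fst_ne_zero_of_snd_ne (hr : (φ r).snd ≠ 0) (hp : ⟪p, r⟫ = ‖r‖ ^ 2)
    (hpr : (φ p).snd ≠ (φ r).snd) : (φ r).fst ≠ 0 := by
  intro h0
  rw [← real_inner_self_eq_norm_sq, inner_eq_inner_fst_add_snd_mul_snd φ,
    inner_eq_inner_fst_add_snd_mul_snd φ r, h0, inner_zero_right, inner_zero_right, zero_add,
    zero_add] at hp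
  exact hpr (mul_right_cancel₀ hr hp)

lemma snd_sq_le_norm_sq (x : E) : (φ x).snd ^ 2 ≤ ‖x‖ ^ 2 := by
  rw [← real_inner_self_eq_norm_sq, inner_eq_inner_fst_add_snd_mul_snd φ, ← sq]
  exact le_add_of_nonneg_left real_inner_self_nonneg

lemma infDist_fst_le_two_mul (hπr : (φ r).fst ≠ 0) (hr : 0 < (φ r).snd)
    (hβγ : β ≤ γ * (φ r).snd) (hp : ⟪p, r⟫ = ‖r‖ ^ 2) (hpβ : |(φ p).snd| ≤ β) :
    infDist (φ p).fst {z | ⟪z, (φ r).fst⟫ = ‖r‖ ^ 2 + β * (φ r).snd} ≤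
      2 * γ * infDist 0 {z | ⟪z, (φ r).fst⟫ = ‖r‖ ^ 2 + β * (φ r).snd} := by
  set s := (φ r).snd
  have hβ : 0 ≤ β := (abs_nonneg _).trans hpβ
  have hγ : 0 ≤ γ := nonneg_of_mul_nonneg_left (hβ.trans hβγ) hr
  have hheight : |(φ p).snd + β| ≤ 2 * β := by
    rw [two_mul]
    exact (abs_add_le _ _).trans (add_le_add hpβ (abs_of_nonneg hβ).le)
  have hgap : ⟪(φ p).fst, (φ r).fst⟫ - (‖r‖ ^ 2 + β * s) = -(((φ p).snd + β) * s) := by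
    linear_combination hp - inner_eq_inner_fst_add_snd_mul_snd φ p r
  rw [infDist_hyperplane hπr, infDist_hyperplane hπr, inner_zero_left, zero_sub, abs_neg,
    ← mul_div_assoc]
  gcongr
  calc |⟪(φ p).fst, (φ r).fst⟫ - (‖r‖ ^ 2 + β * s)| = |(φ p).snd + β| * s := by
        rw [hgap, abs_neg, abs_mul, abs_of_pos hr]
    _ ≤ 2 * (γ * s) * s := by
        gcongr
        exact hheight.trans (by gcongr)
    _ = 2 * γ * s ^ 2 := by ring
    _ ≤ 2 * γ * |‖r‖ ^ 2 + β * s| := by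
        gcongr
        refine (snd_sq_le_norm_sq φ r).trans (le_trans ?_ (le_abs_self _))
        linarith [mul_nonneg hβ hr.le]

/-- Here `(φ x).fst` and `(φ x).snd` play the roles of `π x` and `xᵏ`, and `hβγ` is the bound
`‖r⁺‖ ≤ γ ‖r‖` divided by `‖r‖ / rᵏ`. -/
theorem statement11_general (hπr : (φ r).fst ≠ 0) (hr : 0 < (φ r).snd)
    (hβγ : β ≤ γ * (φ r).snd) (hp : ⟪p, r⟫ = ‖r‖ ^ 2) (hpβ : |(φ p).snd| ≤ β)
    (hy : y ∈ segment ℝ 0 p)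
    (hyP : infDist y {x | ⟪x, r⟫ = ‖r‖ ^ 2} ≤ δ * infDist 0 {x | ⟪x, r⟫ = ‖r‖ ^ 2}) :
    infDist (φ y).fst
        ((fun x => (φ x).fst) '' ({x | ⟪x, r⟫ = ‖r‖ ^ 2} ∩ {x | (φ x).snd = -β})) ≤
      (δ + 2 * γ) *
        infDist 0 ((fun x => (φ x).fst) '' ({x | ⟪x, r⟫ = ‖r‖ ^ 2} ∩ {x | (φ x).snd = -β})) := by
  rw [image_fst_hyperplane_inter_snd_eq, neg_mul, sub_neg_eq_add]
  set H := {z | ⟪z, (φ r).fst⟫ = ‖r‖ ^ 2 + β * (φ r).snd}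
  have hr0 : r ≠ 0 := by
    rintro rfl
    simp at hr
  obtain ⟨a, t, ha, ht, hat, rfl⟩ := hy
  obtain rfl : a = 1 - t := eq_sub_of_add_eq hat
  rw [smul_zero, zero_add] at hyP
  have htδ : 1 - t ≤ δ := one_sub_le_of_infDist_smul_hyperplane_le hr0 (by positivity) hp hyP
  have hpH : infDist (φ p).fst H ≤ 2 * γ * infDist 0 H := infDist_fst_le_two_mul φ hπr hr hβγ hp hpβ
  calc infDist (φ ((1 - t) • 0 + t • p)).fst H
      = infDist ((1 - t) • 0 + t • (φ p).fst) H := by simp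
    _ ≤ (1 - t) * infDist 0 H + t * infDist (φ p).fst H :=
      (convexOn_infDist (convex_hyperplane_inner _ _)).2 (mem_univ _) (mem_univ _) ha ht hat
    _ ≤ δ * infDist 0 H + 2 * γ * infDist 0 H :=
      add_le_add (mul_le_mul_of_nonneg_right htδ infDist_nonneg)
        ((mul_le_of_le_one_left infDist_nonneg (sub_nonneg.1 ha)).trans hpH)
    _ = (δ + 2 * γ) * infDist 0 H := by ring

end Height

/-- The isometry `𝕜ⁿ⁺¹ ≃ 𝕜ⁿ × 𝕜` (with the `L²` norm on the product) that separates the last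
coordinate from the others. -/
noncomputable def splitLast (𝕜 : Type*) [RCLike 𝕜] (n : ℕ) :
    EuclideanSpace 𝕜 (Fin (n + 1)) ≃ₗᵢ[𝕜] WithLp 2 (EuclideanSpace 𝕜 (Fin n) × 𝕜) where
  toFun x := WithLp.toLp 2 (WithLp.toLp 2 fun i => x i.castSucc, x (Fin.last n))
  invFun z := WithLp.toLp 2 (Fin.snoc (α := fun _ => 𝕜) z.fst z.snd)
  map_add' _ _ := rfl
  map_smul' _ _ := rfl
  left_inv x := by
    ext i
    exact congrFun (Fin.snoc_init_self (α := fun _ => 𝕜) x.ofLp) i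
  right_inv z :=
    WithLp.ofLp_injective 2 <| Prod.ext (PiLp.ext fun i => by simp) (by simp)
  norm_map' x := by
    rw [← sq_eq_sq₀ (norm_nonneg _) (norm_nonneg _), EuclideanSpace.norm_sq_eq,
      WithLp.prod_norm_sq_eq_of_L2, EuclideanSpace.norm_sq_eq]
    exact (Fin.sum_univ_castSucc fun i => ‖x i‖ ^ 2).symm

/-- Let `k ≥ 2`, `b¹, …, bᵏ > 0`,
`R = {x ∈ ℝᵏ | ∀ i, |xⁱ| ≤ bⁱ}`, and let `π : ℝᵏ → ℝ^(k-1)` be the projection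
onto the first `k-1` coordinates.  Let `P = {x | ⟪x, r⟫ = ‖r‖²}` be a
hyperplane not through the origin with foot of perpendicular `r ≠ 0`, with
`rᵏ > 0` and `r⁺ = (bᵏ/rᵏ) • r ∈ R`.  Let `γ ∈ (0,1)` with `‖r⁺‖ ≤ γ ‖r‖`,
and `δ ≥ 0`.  Let `p ∈ P ∩ R` with `π p ≠ 0`, and `y ∈ [0, p]` with
`dist(y, P) ≤ δ dist(0, P)`.  Let `T` be the span of the `k`-th coordinate
vector `e_k` and `p`, assume `ℓ = T ∩ P` meets `Q⁻ = {x | xᵏ = -bᵏ}` in a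
single point, and let `P' = π (P ∩ Q⁻)`.  Then
`dist(π y, P') ≤ (δ + 2γ) dist(0, P')`. -/
theorem statement11 (k : ℕ) (hk : 2 ≤ k)
    (b : Fin k → ℝ) (hb : ∀ i, 0 < b i)
    (R : Set (EuclideanSpace ℝ (Fin k)))
    (hR : R = {x | ∀ i, |x i| ≤ b i})
    (π : EuclideanSpace ℝ (Fin k) → EuclideanSpace ℝ (Fin (k - 1)))
    (hπ : ∀ x (i : Fin (k - 1)), π x i = x (Fin.castLE (Nat.sub_le k 1) i))
    (r : EuclideanSpace ℝ (Fin k)) (hr : r ≠ 0)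
    (hrk : 0 < r ⟨k - 1, by omega⟩)
    (rp : EuclideanSpace ℝ (Fin k))
    (hrpdef : rp = (b ⟨k - 1, by omega⟩ / r ⟨k - 1, by omega⟩) • r)
    (hrpR : rp ∈ R)
    (γ : ℝ) (hγ0 : 0 < γ) (hγ1 : γ < 1) (hrpγ : ‖rp‖ ≤ γ * ‖r‖)
    (δ : ℝ) (hδ : 0 ≤ δ)
    (p : EuclideanSpace ℝ (Fin k)) (hpP : ⟪p, r⟫ = ‖r‖ ^ 2) (hpR : p ∈ R)
    (hπp : π p ≠ 0)
    (y : EuclideanSpace ℝ (Fin k)) (hy : y ∈ segment ℝ 0 p)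
    (hyP : infDist y {x : EuclideanSpace ℝ (Fin k) | ⟪x, r⟫ = ‖r‖ ^ 2} ≤
      δ * infDist 0 {x : EuclideanSpace ℝ (Fin k) | ⟪x, r⟫ = ‖r‖ ^ 2})
    (T : Submodule ℝ (EuclideanSpace ℝ (Fin k)))
    (hT : T = Submodule.span ℝ {EuclideanSpace.single ⟨k - 1, by omega⟩ (1 : ℝ), p})
    (hline : ∃! q, q ∈ (T : Set (EuclideanSpace ℝ (Fin k))) ∩
        {x : EuclideanSpace ℝ (Fin k) | ⟪x, r⟫ = ‖r‖ ^ 2} ∩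
        {x : EuclideanSpace ℝ (Fin k) | x ⟨k - 1, by omega⟩ = -(b ⟨k - 1, by omega⟩)})
    (P' : Set (EuclideanSpace ℝ (Fin (k - 1))))
    (hP' : P' = π '' ({x : EuclideanSpace ℝ (Fin k) | ⟪x, r⟫ = ‖r‖ ^ 2} ∩
        {x : EuclideanSpace ℝ (Fin k) | x ⟨k - 1, by omega⟩ = -(b ⟨k - 1, by omega⟩)})) :
    infDist (π y) P' ≤ (δ + 2 * γ) * infDist 0 P' := by
  obtain ⟨m, rfl⟩ : ∃ m, k = m + 1 := ⟨k - 1, by omega⟩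
  obtain rfl : π = fun x => (splitLast ℝ m x).fst := funext fun x => PiLp.ext (hπ x)
  subst hR hrpdef hP'
  have hβγ : b (Fin.last m) ≤ γ * r (Fin.last m) := le_mul_of_norm_div_smul_le hr hrk hrpγ
  have hpβ : |p (Fin.last m)| ≤ b (Fin.last m) := hpR (Fin.last m)
  have hpr : p (Fin.last m) < r (Fin.last m) :=
    ((le_abs_self _).trans (hpβ.trans hβγ)).trans_lt (mul_lt_of_lt_one_left hrk hγ1)
  have hπr : (splitLast ℝ m r).fst ≠ 0 := fst_ne_zero_of_snd_ne _ hrk.ne' hpP hpr.ne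
  exact statement11_general (splitLast ℝ m) hπr hrk hβγ hpP hpβ hy hyP
end

section
/- Let S ⊂ ℝⁿ be a well-centered convex body with inner John ellipsoid E, coordinates along the principal axes of E with semi-axis lengths a¹,…,aⁿ > 0. Fix 0 ≤ s ≤ s₀ < 1 and set c₀ = (1 + s₀^(1/2^n))/(1 − s₀^(1/2^n)). Suppose y ∈ S and p₁ ∈ ℝ satisfy: |p₁| ≤ c₀^(n−1) n a¹; the first coordinate y¹ of y lies in the segment [0, p₁] and |y¹ − p₁| ≤ (2n−1) s^(1/2^(n−1)) |p₁|; and the hyperplane {x ∈ ℝⁿ : x¹ = p₁} does not meet the interior of S. Then there exists a hyperplane P supporting S with dist(y, P) ≤ n^(3/2) c₀^(n−1) (n − 1/2) s^(1/2^(n−1)) diam(P^⊥ ∩ S). -/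
open Metric Set
open scoped RealInnerProductSpace Pointwise

/-!
The hyperplane `{x | x¹ = p₁}` misses the interior of the convex set `S`, so `S` lies on one side
of it. Translating it towards `S` until it touches gives a supporting hyperplane `P` with
`dist (y, P) ≤ |y¹ - p₁| ≤ (2n-1) s^(1/2^(n-1)) c₀^(n-1) n a¹`. The line `P^⊥` is the first
principal axis of `E`, whose endpoints lie in `S`, so `diam (P^⊥ ∩ S) ≥ 2 a¹`.
-/

section Convex

variable {E : Type*} [AddCommGroup E] [Module ℝ E] [TopologicalSpace E]
  [IsTopologicalAddGroup E] [ContinuousSMul ℝ E] {S : Set E} {f : E → ℝ} {x₀ : E} {p : ℝ}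

lemma lt_of_mem_interior_of_forall_mem_interior_ne (hS : Convex ℝ S) (hf : Continuous f)
    (hx₀ : x₀ ∈ interior S) (hlt : f x₀ < p) (hne : ∀ x ∈ interior S, f x ≠ p) {x : E}
    (hx : x ∈ interior S) : f x < p := by
  by_contra! hpx
  obtain ⟨z, hz, hzp⟩ := hS.interior.isPreconnected.intermediate_value hx₀ hx hf.continuousOn
    ⟨hlt.le, hpx⟩
  exact hne z hz hzp

lemma le_of_forall_mem_interior_ne (hS : Convex ℝ S) (hf : Continuous f)
    (hx₀ : x₀ ∈ interior S) (hlt : f x₀ < p) (hne : ∀ x ∈ interior S, f x ≠ p) {x : E}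
    (hx : x ∈ S) : f x ≤ p := by
  have hclosure : closure (interior S) ⊆ {x | f x ≤ p} :=
    closure_minimal
      (fun _ hz ↦ (lt_of_mem_interior_of_forall_mem_interior_ne hS hf hx₀ hlt hne hz).le)
      (isClosed_le hf continuous_const)
  rw [hS.closure_interior_eq_closure_of_nonempty_interior ⟨x₀, hx₀⟩] at hclosure
  exact hclosure (subset_closure hx)

end Convex

lemma two_mul_norm_le_diam {F : Type*} [NormedAddCommGroup F] [NormedSpace ℝ F] {T : Set F} {x : F}
    (hT : Bornology.IsBounded T) (hx : x ∈ T) (hnx : -x ∈ T) : 2 * ‖x‖ ≤ diam T := by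
  simpa only [dist_eq_norm, sub_neg_eq_add, ← two_smul ℝ x, norm_smul, Real.norm_ofNat]
    using dist_le_diam_of_mem hT hx hnx

section InnerProductSpace

variable {F : Type*} [NormedAddCommGroup F] [InnerProductSpace ℝ F]

lemma infDist_hyperplane_s12 (y : F) {v : F} (hv : v ≠ 0) (c : ℝ) :
    infDist y {x | ⟪x, v⟫ = c} = |⟪y, v⟫ - c| / ‖v‖ := by
  have hnorm : 0 < ‖v‖ := norm_pos_iff.2 hv
  set z : F := y - ((⟪y, v⟫ - c) / ‖v‖ ^ 2) • v with hz
  have hzmem : z ∈ {x | ⟪x, v⟫ = c} := by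
    simp only [mem_ofPred_eq, hz, inner_sub_left, real_inner_smul_left, real_inner_self_eq_norm_sq]
    field_simp
    ring
  apply le_antisymm
  · refine (infDist_le_dist_of_mem hzmem).trans_eq ?_
    simp only [dist_eq_norm, hz, sub_sub_cancel, norm_smul, norm_div, norm_pow,
      Real.norm_eq_abs, abs_norm]
    field_simp
  · refine (le_infDist ⟨z, hzmem⟩).2 fun {x} (hx : ⟪x, v⟫ = c) ↦ ?_
    rw [div_le_iff₀ hnorm, dist_eq_norm, ← hx, ← inner_sub_left]
    exact abs_real_inner_le_norm _ _

variable {S : Set F} {u x₀ y : F} {p r C : ℝ}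

lemma exists_supporting_hyperplane_infDist_le_s12 (hScomp : IsCompact S) (hSconv : Convex ℝ S)
    (hx₀ : x₀ ∈ interior S) (hu : ‖u‖ = 1) (hlt : ⟪x₀, u⟫ < p)
    (hne : ∀ x ∈ interior S, ⟪x, u⟫ ≠ p) (hy : y ∈ S) :
    ∃ c : ℝ, ({x | ⟪x, u⟫ = c} ∩ S).Nonempty ∧ (∀ x ∈ S, ⟪x, u⟫ ≤ c) ∧
      infDist y {x | ⟪x, u⟫ = c} ≤ |⟪y, u⟫ - p| := by
  have hcont : Continuous fun x : F ↦ ⟪x, u⟫ := by fun_prop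
  obtain ⟨z, hzS, hzmax⟩ := hScomp.exists_isMaxOn ⟨y, hy⟩ hcont.continuousOn
  have hyz : ⟪y, u⟫ ≤ ⟪z, u⟫ := hzmax hy
  have hzp : ⟪z, u⟫ ≤ p := le_of_forall_mem_interior_ne hSconv hcont hx₀ hlt hne hzS
  refine ⟨⟪z, u⟫, ⟨z, rfl, hzS⟩, fun x hx ↦ hzmax hx, ?_⟩
  rw [infDist_hyperplane_s12 y (norm_ne_zero_iff.1 (by simp [hu])), hu, div_one,
    abs_of_nonpos (by linarith), abs_of_nonpos (by linarith)]
  linarith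

lemma exists_supporting_hyperplane_infDist_le_mul_diam (hScomp : IsCompact S)
    (hSconv : Convex ℝ S) (hx₀ : x₀ ∈ interior S) (hu : ‖u‖ = 1) (hr : 0 < r) (hru : r • u ∈ S)
    (hnru : (-r) • u ∈ S) (hlt : ⟪x₀, u⟫ < p) (hne : ∀ x ∈ interior S, ⟪x, u⟫ ≠ p) (hy : y ∈ S)
    (hyp : |⟪y, u⟫ - p| ≤ C * (2 * r)) :
    ∃ c : ℝ, ({x | ⟪x, u⟫ = c} ∩ S).Nonempty ∧ (∀ x ∈ S, ⟪x, u⟫ ≤ c) ∧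
      infDist y {x | ⟪x, u⟫ = c} ≤ C * diam ((Submodule.span ℝ {u} : Set F) ∩ S) := by
  have hspan : r • u ∈ Submodule.span ℝ {u} :=
    Submodule.smul_mem _ _ (Submodule.mem_span_singleton_self u)
  have hC : 0 ≤ C := nonneg_of_mul_nonneg_left ((abs_nonneg _).trans hyp) (by positivity)
  obtain ⟨c, hmeet, hle, hdist⟩ :=
    exists_supporting_hyperplane_infDist_le_s12 hScomp hSconv hx₀ hu hlt hne hy
  refine ⟨c, hmeet, hle, ?_⟩
  calc infDist y {x | ⟪x, u⟫ = c} ≤ |⟪y, u⟫ - p| := hdist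
    _ ≤ C * (2 * r) := hyp
    _ = C * (2 * ‖r • u‖) := by rw [norm_smul, hu, mul_one, Real.norm_of_nonneg hr.le]
    _ ≤ C * diam ((Submodule.span ℝ {u} : Set F) ∩ S) := by
      gcongr
      exact two_mul_norm_le_diam (hScomp.isBounded.subset inter_subset_right) ⟨hspan, hru⟩
        ⟨Submodule.neg_mem _ hspan, by rwa [← neg_smul]⟩

theorem statement12_general (hScomp : IsCompact S) (hSconv : Convex ℝ S)
    (hSint : (interior S).Nonempty) (hu : ‖u‖ = 1) (hr : 0 < r) (hru : r • u ∈ S)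
    (hnru : (-r) • u ∈ S) (hne : ∀ x ∈ interior S, ⟪x, u⟫ ≠ p) (hy : y ∈ S)
    (hyp : |⟪y, u⟫ - p| ≤ C * (2 * r)) :
    ∃ (v : F) (c : ℝ), v ≠ 0 ∧ ({x | ⟪x, v⟫ = c} ∩ S).Nonempty ∧ (∀ x ∈ S, ⟪x, v⟫ ≤ c) ∧
      infDist y {x | ⟪x, v⟫ = c} ≤ C * diam ((Submodule.span ℝ {v} : Set F) ∩ S) := by
  have hu0 : u ≠ 0 := norm_ne_zero_iff.1 (by simp [hu])
  obtain ⟨x₀, hx₀⟩ := hSint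
  rcases (hne x₀ hx₀).lt_or_gt with hlt | hgt
  · obtain ⟨c, hc⟩ := exists_supporting_hyperplane_infDist_le_mul_diam hScomp hSconv hx₀ hu hr
      hru hnru hlt hne hy hyp
    exact ⟨u, c, hu0, hc⟩
  · have hyp' : |⟪y, -u⟫ - -p| ≤ C * (2 * r) := by
      rwa [inner_neg_right, neg_sub_neg, abs_sub_comm]
    obtain ⟨c, hc⟩ := exists_supporting_hyperplane_infDist_le_mul_diam hScomp hSconv hx₀
      (u := -u) (by simpa) hr (by simpa using hnru) (by simpa using hru) (by simpa) (by simpa)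
      hy hyp'
    exact ⟨-u, c, neg_ne_zero.2 hu0, hc⟩

end InnerProductSpace

lemma smul_single_mem_ellipsoid {ι : Type*} [Fintype ι] [DecidableEq ι] {a : ι → ℝ} {i : ι}
    {b : ℝ} (hb : |b| ≤ |a i|) :
    b • EuclideanSpace.single i 1 ∈ {x : EuclideanSpace ℝ ι | ∑ j, (x j / a j) ^ 2 ≤ 1} := by
  have hsum : ∑ j, ((b • EuclideanSpace.single i (1 : ℝ)) j / a j) ^ 2 = (b / a i) ^ 2 := by
    rw [Finset.sum_eq_single i (fun j _ hj ↦ by simp [hj]) (by simp)]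
    simp
  rw [mem_ofPred_eq, hsum, sq_le_one_iff_abs_le_one, abs_div]
  exact div_le_one_of_le₀ hb (abs_nonneg _)

lemma le_rpow_three_halves_mul {N t q d K a : ℝ} (hN : 1 ≤ N) (ht : 0 ≤ t) (hq : 0 ≤ q)
    (ha : 0 < a) (hd : d ≤ (2 * N - 1) * t * q) (hqK : q ≤ K * N * a) :
    d ≤ N ^ ((3 : ℝ) / 2) * K * (N - 1 / 2) * t * (2 * a) := by
  have hK : 0 ≤ K := by
    rw [mul_assoc] at hqK
    exact nonneg_of_mul_nonneg_left (hq.trans hqK) (by positivity)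
  have hN_le : N ≤ N ^ ((3 : ℝ) / 2) := Real.self_le_rpow_of_one_le hN (by norm_num)
  have hN1 : 0 ≤ 2 * N - 1 := by linarith
  calc d ≤ (2 * N - 1) * t * q := hd
    _ ≤ (2 * N - 1) * t * (K * N ^ ((3 : ℝ) / 2) * a) := by
      gcongr
      exact hqK.trans (by gcongr)
    _ = N ^ ((3 : ℝ) / 2) * K * (N - 1 / 2) * t * (2 * a) := by ring

/-- Let `S ⊂ ℝⁿ` be a well-centered convex body with inner
John ellipsoid `E = {x | ∑ i, (xⁱ/aⁱ)² ≤ 1}` (`aⁱ > 0`, `E ⊆ S ⊆ n • E`).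
Fix `0 ≤ s ≤ s₀ < 1` and set `c₀ = (1 + s₀^(1/2^n))/(1 - s₀^(1/2^n))`.
Suppose `y ∈ S` and `p₁ ∈ ℝ` satisfy `|p₁| ≤ c₀^(n-1) n a¹`; the first
coordinate `y¹` of `y` lies in `[0, p₁]` with
`|y¹ - p₁| ≤ (2n-1) s^(1/2^(n-1)) |p₁|`; and the hyperplane `{x | x¹ = p₁}`
does not meet the interior of `S`.  Then some hyperplane `P` supporting `S`
satisfies `dist(y, P) ≤ n^(3/2) c₀^(n-1) (n - 1/2) s^(1/2^(n-1)) diam (P^⊥ ∩ S)`. -/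
theorem statement12 (n : ℕ) (hn : 1 ≤ n)
    (S : Set (EuclideanSpace ℝ (Fin n)))
    (hScomp : IsCompact S) (hSconv : Convex ℝ S) (hSint : (interior S).Nonempty)
    (a : Fin n → ℝ) (ha : ∀ i, 0 < a i)
    (E : Set (EuclideanSpace ℝ (Fin n)))
    (hE : E = {x | ∑ i, (x i / a i) ^ 2 ≤ 1})
    (hES : E ⊆ S) (hSE : S ⊆ (n : ℝ) • E)
    (s s₀ : ℝ) (hs : 0 ≤ s) (hss₀ : s ≤ s₀) (hs₀ : s₀ < 1)
    (c₀ : ℝ) (hc₀ : c₀ = (1 + s₀ ^ ((1 : ℝ) / 2 ^ n)) / (1 - s₀ ^ ((1 : ℝ) / 2 ^ n)))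
    (y : EuclideanSpace ℝ (Fin n)) (hy : y ∈ S)
    (p₁ : ℝ)
    (hp₁ : |p₁| ≤ c₀ ^ (n - 1) * n * a ⟨0, by omega⟩)
    (hy₁ : y ⟨0, by omega⟩ ∈ segment ℝ 0 p₁)
    (hyp₁ : |y ⟨0, by omega⟩ - p₁| ≤ (2 * (n : ℝ) - 1) * s ^ ((1 : ℝ) / 2 ^ (n - 1)) * |p₁|)
    (hplane : ∀ x ∈ interior S, x ⟨0, by omega⟩ ≠ p₁) :
    ∃ (v : EuclideanSpace ℝ (Fin n)) (c : ℝ), v ≠ 0 ∧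
      ({x | ⟪x, v⟫ = c} ∩ S).Nonempty ∧
      (∀ x ∈ S, ⟪x, v⟫ ≤ c) ∧
      infDist y {x | ⟪x, v⟫ = c} ≤
        (n : ℝ) ^ ((3 : ℝ) / 2) * c₀ ^ (n - 1) * ((n : ℝ) - 1 / 2) *
          s ^ ((1 : ℝ) / 2 ^ (n - 1)) *
          diam ((Submodule.span ℝ {v} : Set (EuclideanSpace ℝ (Fin n))) ∩ S) := by
  subst hE
  have hdev := le_rpow_three_halves_mul (Nat.one_le_cast.2 hn) (Real.rpow_nonneg hs _)
    (abs_nonneg p₁) (ha _) hyp₁ hp₁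
  exact statement12_general hScomp hSconv hSint (u := EuclideanSpace.single _ 1) (by simp)
    (ha _) (hES (smul_single_mem_ellipsoid le_rfl)) (hES (smul_single_mem_ellipsoid (abs_neg _).le))
    (by simpa [EuclideanSpace.inner_single_right] using hplane) hy
    (by simpa [EuclideanSpace.inner_single_right] using hdev)
end
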